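/- arXiv:1203.3699 — 10 statements merged into one kernel-verified Lean document; each statement's English description precedes it below -/
import Mathlib

section
/- Let n ≥ 2 and 1 ≤ r ≤ n-1. If A ⊆ [n]^(r) with |A| = α·C(n,r), then the vertex-boundary of A in Γ_n^(r) satisfies |b(A)| ≥ (1/5)·√(n/(r(n-r)))·α(1-α)·C(n,r). -/
/-- vertex boundary of a family of `r`-subsets of `S` -/
def bdry (S : Finset ℕ) (r : ℕ) (A : Finset (Finset ℕ)) : Finset (Finset ℕ) :=
  (S.powersetCard r).filter (fun x => x ∉ A ∧ ∃ y ∈ A, (symmDiff x y).card = 2)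

/-- sets of the family not containing `e` -/
def part0 (e : ℕ) (A : Finset (Finset ℕ)) : Finset (Finset ℕ) := A.filter (fun x => e ∉ x)

/-- link of `e` in the family -/
def part1 (S : Finset ℕ) (e s : ℕ) (A : Finset (Finset ℕ)) : Finset (Finset ℕ) :=
  ((S.erase e).powersetCard s).filter (fun y => insert e y ∈ A)

lemma key_side (a d q G β : ℝ) (ha : 0 ≤ a) (hd : 0 ≤ d) (had : a + d ≤ 1) (hq : 0 ≤ q)
    (hq1 : q ≤ 1) (hG : 0 ≤ G) (hβ : d ≤ β) (hJ : a * (1 - a) ≤ Real.sqrt G * β) :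
    a * (1 - a) + q * d ^ 2 ≤ Real.sqrt (G + q) * β := by
  have hβ0 : 0 ≤ β := hd.trans hβ
  have h1 : Real.sqrt (G + q) * β = Real.sqrt ((G + q) * β ^ 2) := by
    rw [Real.sqrt_mul (by positivity), Real.sqrt_sq hβ0]
  rw [h1]
  apply Real.le_sqrt_of_sq_le
  have hJ0 : 0 ≤ a * (1 - a) := mul_nonneg ha (by linarith)
  have h2 : (a * (1 - a)) ^ 2 ≤ G * β ^ 2 := by
    have := pow_le_pow_left₀ hJ0 hJ 2
    rwa [mul_pow (Real.sqrt G), Real.sq_sqrt hG] at this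
  have h3 : q * d ^ 2 ≤ q * β ^ 2 := by gcongr
  have h5 : d ^ 2 ≤ (1 - a) ^ 2 := pow_le_pow_left₀ hd (by linarith) 2
  have h6 : q * d ^ 2 ≤ d ^ 2 := mul_le_of_le_one_left (sq_nonneg d) hq1
  have h4 : 2 * (a * (1 - a)) + q * d ^ 2 ≤ 1 := by nlinarith
  have h7 : q * d ^ 2 * (2 * (a * (1 - a)) + q * d ^ 2) ≤ q * d ^ 2 :=
    mul_le_of_le_one_right (by positivity) h4
  nlinarith

lemma two_point (a b p q G1 G0 β1 β0 : ℝ) (ha : 0 ≤ a) (ha1 : a ≤ 1) (hb : 0 ≤ b) (hb1 : b ≤ 1)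
    (hp : 0 ≤ p) (hq : 0 ≤ q) (hpq : p + q = 1) (hG1 : 0 ≤ G1) (hG0 : 0 ≤ G0)
    (hβ1 : 0 ≤ β1) (hβ0 : 0 ≤ β0)
    (h1 : a * (1 - a) ≤ Real.sqrt G1 * β1) (h0 : b * (1 - b) ≤ Real.sqrt G0 * β0)
    (hd1 : b - a ≤ β1) (hd0 : a - b ≤ β0) :
    (p * a + q * b) * (1 - (p * a + q * b)) ≤
      p * (Real.sqrt (G1 + q) * β1) + q * (Real.sqrt (G0 + p) * β0) := by
  have e : (p * a + q * b) * (1 - (p * a + q * b)) =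
      p * (a * (1 - a)) + q * (b * (1 - b)) + p * q * (b - a) ^ 2 := by
    have : q = 1 - p := by linarith
    subst this; ring
  rw [e]
  have m1 : a * (1 - a) ≤ Real.sqrt (G1 + q) * β1 :=
    h1.trans (mul_le_mul_of_nonneg_right (Real.sqrt_le_sqrt (by linarith)) hβ1)
  have m0 : b * (1 - b) ≤ Real.sqrt (G0 + p) * β0 :=
    h0.trans (mul_le_mul_of_nonneg_right (Real.sqrt_le_sqrt (by linarith)) hβ0)
  rcases le_total a b with h | h
  · have k := key_side a (b - a) q G1 β1 ha (by linarith) (by linarith) hq (by linarith) hG1 hd1 h1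
    have := mul_le_mul_of_nonneg_left k hp
    have := mul_le_mul_of_nonneg_left m0 hq
    nlinarith
  · have k := key_side b (a - b) p G0 β0 hb (by linarith) (by linarith) hp (by linarith) hG0 hd0 h0
    have := mul_le_mul_of_nonneg_left k hq
    have := mul_le_mul_of_nonneg_left m1 hp
    nlinarith

lemma symmDiff_insert_insert (e : ℕ) (x y : Finset ℕ) (hx : e ∉ x) (hy : e ∉ y) :
    symmDiff (insert e x) (insert e y) = symmDiff x y := by
  ext z
  simp only [Finset.mem_symmDiff, Finset.mem_insert]
  by_cases h : z = e
  · subst h; simp [hx, hy]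
  · simp [h]

lemma bdry_part1 (S : Finset ℕ) (e s : ℕ) (he : e ∈ S) (A : Finset (Finset ℕ)) :
    bdry (S.erase e) s (part1 S e s A) ⊆ part1 S e s (bdry S (s + 1) A) := by
  intro x hx
  replace hx := Finset.mem_filter.mp hx
  simp only [part1, Finset.mem_filter, Finset.mem_powersetCard] at hx
  simp only [bdry, part1, Finset.mem_filter, Finset.mem_powersetCard]
  obtain ⟨⟨hxS, hxc⟩, hxA, y, ⟨⟨hyS, hyc⟩, hyA⟩, hxy⟩ := hx
  have hex : e ∉ x := fun h => by simpa using hxS h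
  have hey : e ∉ y := fun h => by simpa using hyS h
  refine ⟨⟨hxS, hxc⟩, ⟨?_, ?_⟩, fun h => hxA ⟨⟨hxS, hxc⟩, h⟩, insert e y, hyA, ?_⟩
  · exact Finset.insert_subset he (hxS.trans (Finset.erase_subset _ _))
  · rw [Finset.card_insert_of_notMem hex, hxc]
  · rw [symmDiff_insert_insert e x y hex hey, hxy]

lemma bdry_part0 (S : Finset ℕ) (e r : ℕ) (A : Finset (Finset ℕ)) :
    bdry (S.erase e) r (part0 e A) ⊆ part0 e (bdry S r A) := by
  intro x hx
  replace hx := Finset.mem_filter.mp hx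
  simp only [part0, Finset.mem_filter, Finset.mem_powersetCard] at hx
  simp only [bdry, part0, Finset.mem_filter, Finset.mem_powersetCard]
  obtain ⟨⟨hxS, hxc⟩, hxA, y, ⟨hyA, hey⟩, hxy⟩ := hx
  have hex : e ∉ x := fun h => by simpa using hxS h
  exact ⟨⟨⟨hxS.trans (Finset.erase_subset _ _), hxc⟩, fun h => hxA ⟨h, hex⟩, y, hyA, hxy⟩, hex⟩

lemma adj_swap (e b : ℕ) (x : Finset ℕ) (hb : b ∈ x) (he : e ∉ x) :
    (symmDiff (insert e (x.erase b)) x).card = 2 := by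
  have hne : e ≠ b := fun h => he (h ▸ hb)
  have : symmDiff (insert e (x.erase b)) x = {e, b} := by
    ext z
    simp only [Finset.mem_symmDiff, Finset.mem_insert, Finset.mem_erase, Finset.mem_singleton]
    by_cases h1 : z = e
    · subst h1; simp [he]
    · by_cases h2 : z = b
      · subst h2; simp [hb, h1]
      · simp [h1, h2]
  rw [this, Finset.card_pair hne]

/-- pairs `y ⊆ x` : for fixed `x` (size `s+1`) there are `s+1` sets `y` -/
lemma card_below (T : Finset ℕ) (s : ℕ) (x : Finset ℕ) (hx : x ∈ T.powersetCard (s + 1)) :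
    ((T.powersetCard s).filter (fun y => y ⊆ x)).card = s + 1 := by
  rw [Finset.mem_powersetCard] at hx
  have : (T.powersetCard s).filter (fun y => y ⊆ x) = x.powersetCard s := by
    ext y
    simp only [Finset.mem_filter, Finset.mem_powersetCard]
    exact ⟨fun h => ⟨h.2, h.1.2⟩, fun h => ⟨⟨h.1.trans hx.1, h.2⟩, h.1⟩⟩
  rw [this, Finset.card_powersetCard, hx.2, Nat.choose_succ_self_right]

lemma card_above (T : Finset ℕ) (s : ℕ) (y : Finset ℕ) (hy : y ∈ T.powersetCard s) :
    ((T.powersetCard (s + 1)).filter (fun x => y ⊆ x)).card = T.card - s := by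
  rw [Finset.mem_powersetCard] at hy
  have : (T.powersetCard (s + 1)).filter (fun x => y ⊆ x) = (T \ y).image (fun b => insert b y) := by
    ext x
    simp only [Finset.mem_filter, Finset.mem_powersetCard, Finset.mem_image, Finset.mem_sdiff]
    constructor
    · rintro ⟨⟨hxT, hxc⟩, hyx⟩
      have h1 : (x \ y).card = 1 := by
        rw [Finset.card_sdiff_of_subset hyx]; omega
      obtain ⟨b, hb⟩ := Finset.card_eq_one.mp h1
      have hb' : b ∈ x \ y := by rw [hb]; simp
      rw [Finset.mem_sdiff] at hb'
      refine ⟨b, ⟨hxT hb'.1, hb'.2⟩, ?_⟩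
      rw [← Finset.sdiff_union_of_subset hyx, hb]
      rfl
    · rintro ⟨b, ⟨hbT, hby⟩, rfl⟩
      exact ⟨⟨Finset.insert_subset hbT hy.1, by rw [Finset.card_insert_of_notMem hby, hy.2]⟩,
        Finset.subset_insert _ _⟩
  rw [this, Finset.card_image_of_injOn, Finset.card_sdiff_of_subset hy.1, hy.2]
  intro b hb c hc hbc
  simp only [Finset.coe_sdiff, Set.mem_sdiff, Finset.mem_coe] at hb hc
  have : b ∈ insert c y := by
    have := Finset.mem_insert_self b y
    simp only at hbc
    rwa [hbc] at this
  simpa [hb.2] using this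

lemma exists_erase (s : ℕ) (x y : Finset ℕ) (hx : x.card = s + 1) (hy : y.card = s) (h : y ⊆ x) :
    ∃ b ∈ x, y = x.erase b := by
  have h1 : (x \ y).card = 1 := by
    rw [Finset.card_sdiff_of_subset h]; omega
  obtain ⟨b, hb⟩ := Finset.card_eq_one.mp h1
  have hb' : b ∈ x \ y := by rw [hb]; simp
  rw [Finset.mem_sdiff] at hb'
  refine ⟨b, hb'.1, ?_⟩
  apply Finset.eq_of_subset_of_card_le
  · intro z hz
    exact Finset.mem_erase.mpr ⟨fun hh => hb'.2 (hh ▸ hz), h hz⟩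
  · rw [Finset.card_erase_of_mem hb'.1]; omega

lemma shadow_ineq (S : Finset ℕ) (e s : ℕ) (he : e ∈ S) (A : Finset (Finset ℕ))
    (hA : A ⊆ S.powersetCard (s + 1)) :
    (part0 e A).card * (s + 1) ≤
      ((part1 S e s A).card + (part1 S e s (bdry S (s + 1) A)).card) * ((S.erase e).card - s) := by
  refine le_trans ?_ (Nat.mul_le_mul_right _ (Finset.card_union_le _ _))
  have memT : ∀ x ∈ part0 e A, x ∈ (S.erase e).powersetCard (s + 1) := by
    intro x hx
    simp only [part0, Finset.mem_filter] at hx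
    have := Finset.mem_powersetCard.mp (hA hx.1)
    exact Finset.mem_powersetCard.mpr ⟨Finset.subset_erase.mpr ⟨this.1, hx.2⟩, this.2⟩
  apply Finset.card_mul_le_card_mul (fun x y => y ⊆ x)
  · intro x hx
    refine (card_below (S.erase e) s x (memT x hx)).symm.le.trans ?_
    apply Finset.card_le_card
    intro y hy
    rw [Finset.mem_filter] at hy
    rw [Finset.mem_bipartiteAbove]
    refine ⟨?_, hy.2⟩
    have hyT := Finset.mem_powersetCard.mp hy.1
    have hxT := Finset.mem_powersetCard.mp (memT x hx)
    obtain ⟨b, hb, rfl⟩ := exists_erase s x y hxT.2 hyT.2 hy.2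
    simp only [part0, Finset.mem_filter] at hx
    rw [Finset.mem_union]
    by_cases hin : insert e (x.erase b) ∈ A
    · left; exact Finset.mem_filter.mpr ⟨hy.1, hin⟩
    · right
      refine Finset.mem_filter.mpr ⟨hy.1, Finset.mem_filter.mpr ⟨?_, hin, x, hx.1,
        adj_swap e b x hb hx.2⟩⟩
      rw [Finset.mem_powersetCard]
      refine ⟨Finset.insert_subset he (hyT.1.trans (Finset.erase_subset _ _)), ?_⟩
      have hne : e ∉ x.erase b := fun h => hx.2 (Finset.mem_of_mem_erase h)
      rw [Finset.card_insert_of_notMem hne, hyT.2]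
  · intro y hy
    have hyT : y ∈ (S.erase e).powersetCard s := by
      rcases Finset.mem_union.mp hy with h | h <;> exact (Finset.mem_filter.mp h).1
    rw [← card_above (S.erase e) s y hyT]
    apply Finset.card_le_card
    intro x hx
    rw [Finset.mem_bipartiteBelow] at hx
    exact Finset.mem_filter.mpr ⟨memT x hx.1, hx.2⟩

lemma upshadow_ineq (S : Finset ℕ) (e s : ℕ) (A : Finset (Finset ℕ))
    (hA : A ⊆ S.powersetCard (s + 1)) :
    (part1 S e s A).card * ((S.erase e).card - s) ≤
      ((part0 e A).card + (part0 e (bdry S (s + 1) A)).card) * (s + 1) := by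
  refine le_trans ?_ (Nat.mul_le_mul_right _ (Finset.card_union_le _ _))
  apply Finset.card_mul_le_card_mul (fun y x => y ⊆ x)
  · intro y hy
    simp only [part1, Finset.mem_filter] at hy
    rw [← card_above (S.erase e) s y hy.1]
    apply Finset.card_le_card
    intro x hx
    rw [Finset.mem_filter] at hx
    rw [Finset.mem_bipartiteAbove]
    refine ⟨?_, hx.2⟩
    have hyT := Finset.mem_powersetCard.mp hy.1
    have hxT := Finset.mem_powersetCard.mp hx.1
    have hex : e ∉ x := fun h => by simpa using hxT.1 h
    obtain ⟨b, hb, rfl⟩ := exists_erase s x y hxT.2 hyT.2 hx.2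
    rw [Finset.mem_union]
    by_cases hin : x ∈ A
    · left; exact Finset.mem_filter.mpr ⟨hin, hex⟩
    · right
      refine Finset.mem_filter.mpr ⟨Finset.mem_filter.mpr ⟨?_, hin, _, hy.2, ?_⟩, hex⟩
      · exact Finset.mem_powersetCard.mpr ⟨hxT.1.trans (Finset.erase_subset _ _), hxT.2⟩
      · rw [symmDiff_comm]; exact adj_swap e b x hb hex
  · intro x hx
    have hxT : x ∈ (S.erase e).powersetCard (s + 1) := by
      rcases Finset.mem_union.mp hx with h | h
      · have h := Finset.mem_filter.mp h
        have := Finset.mem_powersetCard.mp (hA h.1)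
        exact Finset.mem_powersetCard.mpr ⟨Finset.subset_erase.mpr ⟨this.1, h.2⟩, this.2⟩
      · have h := Finset.mem_filter.mp h
        have := Finset.mem_powersetCard.mp (Finset.mem_filter.mp h.1).1
        exact Finset.mem_powersetCard.mpr ⟨Finset.subset_erase.mpr ⟨this.1, h.2⟩, this.2⟩
    rw [← card_below (S.erase e) s x hxT]
    apply Finset.card_le_card
    intro y hy
    rw [Finset.mem_bipartiteBelow] at hy
    exact Finset.mem_filter.mpr ⟨(Finset.mem_filter.mp hy.1).1, hy.2⟩

lemma card_part1 (S : Finset ℕ) (e s : ℕ) (A : Finset (Finset ℕ))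
    (hA : A ⊆ S.powersetCard (s + 1)) :
    (part1 S e s A).card = (A.filter (fun x => e ∈ x)).card := by
  apply Finset.card_bij (fun y _ => insert e y)
  · intro y hy
    exact Finset.mem_filter.mpr ⟨(Finset.mem_filter.mp hy).2, Finset.mem_insert_self _ _⟩
  · intro y hy z hz h
    have hy' := Finset.mem_powersetCard.mp (Finset.mem_filter.mp hy).1
    have hz' := Finset.mem_powersetCard.mp (Finset.mem_filter.mp hz).1
    have h1 : e ∉ y := fun h => by simpa using hy'.1 h
    have h2 : e ∉ z := fun h => by simpa using hz'.1 h
    rw [← Finset.erase_insert h1, ← Finset.erase_insert h2, h]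
  · intro x hx
    have hx := Finset.mem_filter.mp hx
    have hxS := Finset.mem_powersetCard.mp (hA hx.1)
    refine ⟨x.erase e, Finset.mem_filter.mpr ⟨?_, ?_⟩, Finset.insert_erase hx.2⟩
    · exact Finset.mem_powersetCard.mpr ⟨Finset.erase_subset_erase _ hxS.1, by
        rw [Finset.card_erase_of_mem hx.2, hxS.2]; rfl⟩
    · rw [Finset.insert_erase hx.2]; exact hx.1

lemma part0_subset (S : Finset ℕ) (e r : ℕ) (A : Finset (Finset ℕ))
    (hA : A ⊆ S.powersetCard r) : part0 e A ⊆ (S.erase e).powersetCard r := by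
  intro x hx
  simp only [part0, Finset.mem_filter] at hx
  have := Finset.mem_powersetCard.mp (hA hx.1)
  exact Finset.mem_powersetCard.mpr ⟨Finset.subset_erase.mpr ⟨this.1, hx.2⟩, this.2⟩

/-- The square of the weight. -/
noncomputable def Gw (n r : ℝ) : ℝ := 2 * r * (n - r) / n

/-- one step : removing the element `e` -/
lemma step (m s : ℕ) (hs : s + 1 ≤ m)
    (IH : ∀ (r : ℕ) (S : Finset ℕ) (A : Finset (Finset ℕ)), r ≤ m → S.card = m →
      A ⊆ S.powersetCard r →
      (A.card / (m.choose r : ℝ)) * (1 - A.card / (m.choose r : ℝ)) ≤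
        Real.sqrt (Gw m r) * ((bdry S r A).card / (m.choose r : ℝ)))
    (S : Finset ℕ) (hS : S.card = m + 1) (A : Finset (Finset ℕ)) (hA : A ⊆ S.powersetCard (s + 1))
    (e : ℕ) (he : e ∈ S) :
    ((m + 1).choose (s + 1) : ℝ) * ((A.card / ((m + 1).choose (s + 1) : ℝ)) *
      (1 - A.card / ((m + 1).choose (s + 1) : ℝ))) ≤
      Real.sqrt (Gw m s + (m - s) / (m + 1)) * ((bdry S (s + 1) A).filter (fun x => e ∈ x)).card +
      Real.sqrt (Gw m (s + 1) + (s + 1) / (m + 1)) *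
        ((bdry S (s + 1) A).filter (fun x => e ∉ x)).card := by
  have hSe : (S.erase e).card = m := by rw [Finset.card_erase_of_mem he, hS]; rfl
  have hB : bdry S (s + 1) A ⊆ S.powersetCard (s + 1) := Finset.filter_subset _ _
  have i1 := IH s (S.erase e) (part1 S e s A) (by omega) hSe (Finset.filter_subset _ _)
  have i0 := IH (s + 1) (S.erase e) (part0 e A) hs hSe (part0_subset S e _ A hA)
  have c1 := Finset.card_le_card (bdry_part1 S e s he A)
  have c0 := Finset.card_le_card (bdry_part0 S e (s + 1) A)
  have s1 := shadow_ineq S e s he A hA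
  have s0 := upshadow_ineq S e s A hA
  have a1 : (part1 S e s A).card ≤ m.choose s := by
    have := Finset.card_le_card (Finset.filter_subset (fun y => insert e y ∈ A)
      ((S.erase e).powersetCard s))
    rwa [Finset.card_powersetCard, hSe] at this
  have a0 : (part0 e A).card ≤ m.choose (s + 1) := by
    have := Finset.card_le_card (part0_subset S e _ A hA)
    rwa [Finset.card_powersetCard, hSe] at this
  have tot : (part1 S e s A).card + (part0 e A).card = A.card := by
    rw [card_part1 S e s A hA]
    exact Finset.card_filter_add_card_filter_not _
  rw [← card_part1 S e s _ hB]
  change _ ≤ _ + _ * ((part0 e (bdry S (s + 1) A)).card : ℝ)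
  rw [hSe] at s1 s0
  have hN1 : 0 < m.choose s := Nat.choose_pos (by omega)
  have hN0 : 0 < m.choose (s + 1) := Nat.choose_pos hs
  have hrel : m.choose (s + 1) * (s + 1) = m.choose s * (m - s) := Nat.choose_succ_right_eq m s
  have hN : (m + 1).choose (s + 1) = m.choose s + m.choose (s + 1) := Nat.choose_succ_succ m s
  generalize (bdry (S.erase e) s (part1 S e s A)).card = D1 at *
  generalize (bdry (S.erase e) (s + 1) (part0 e A)).card = D0 at *
  generalize (part1 S e s (bdry S (s + 1) A)).card = B1 at *
  generalize (part0 e (bdry S (s + 1) A)).card = B0 at *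
  generalize (part1 S e s A).card = A1 at *
  generalize (part0 e A).card = A0 at *
  generalize (m + 1).choose (s + 1) = N at *
  generalize m.choose s = N1 at *
  generalize m.choose (s + 1) = N0 at *
  rw [← tot]
  subst hN
  obtain ⟨t, rfl⟩ : ∃ t, m = s + 1 + t := ⟨m - (s + 1), by omega⟩
  have hms : s + 1 + t - s = t + 1 := by omega
  rw [hms] at hrel s1 s0
  have hN1' : (0 : ℝ) < N1 := by exact_mod_cast hN1
  have hN0' : (0 : ℝ) < N0 := by exact_mod_cast hN0
  have hrel' : (N0 : ℝ) * (s + 1) = N1 * (t + 1) := by exact_mod_cast hrel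
  have s1' : (A0 : ℝ) * (s + 1) ≤ (A1 + B1) * (t + 1) := by exact_mod_cast s1
  have s0' : (A1 : ℝ) * (t + 1) ≤ (A0 + B0) * (s + 1) := by exact_mod_cast s0
  have hs0 : (0 : ℝ) ≤ s := Nat.cast_nonneg s
  have ht0 : (0 : ℝ) ≤ t := Nat.cast_nonneg t
  have hp : ((s : ℝ) + 1) / (((s + 1 + t : ℕ) : ℝ) + 1) = N1 / (N1 + N0) := by
    push_cast
    rw [div_eq_div_iff (by positivity) (by positivity)]
    nlinarith
  have hq : (((s + 1 + t : ℕ) : ℝ) - s) / (((s + 1 + t : ℕ) : ℝ) + 1) = N0 / (N1 + N0) := by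
    push_cast
    rw [div_eq_div_iff (by positivity) (by positivity)]
    nlinarith
  have l1 : (A0 : ℝ) / N0 ≤ (A1 + B1) / N1 := by
    rw [div_le_div_iff₀ hN0' hN1']
    have h : (A0 : ℝ) * N1 * (t + 1) ≤ (A1 + B1) * N0 * (t + 1) := by
      have := mul_le_mul_of_nonneg_right s1' hN0'.le
      calc (A0 : ℝ) * N1 * (t + 1) = A0 * (N1 * (t + 1)) := by ring
        _ = A0 * (s + 1) * N0 := by rw [← hrel']; ring
        _ ≤ _ := by linarith
    exact le_of_mul_le_mul_right h (by positivity)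
  have l0 : (A1 : ℝ) / N1 ≤ (A0 + B0) / N0 := by
    rw [div_le_div_iff₀ hN1' hN0']
    have h : (A1 : ℝ) * N0 * (s + 1) ≤ (A0 + B0) * N1 * (s + 1) := by
      have := mul_le_mul_of_nonneg_right s0' hN1'.le
      calc (A1 : ℝ) * N0 * (s + 1) = A1 * (N0 * (s + 1)) := by ring
        _ = A1 * (t + 1) * N1 := by rw [hrel']; ring
        _ ≤ _ := by linarith
    exact le_of_mul_le_mul_right h (by positivity)
  rw [add_div] at l1 l0
  rw [hp, hq]
  have hG1 : 0 ≤ Gw ((s + 1 + t : ℕ) : ℝ) s := by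
    unfold Gw; push_cast
    apply div_nonneg _ (by positivity)
    apply mul_nonneg (by positivity); linarith
  have hG0 : 0 ≤ Gw ((s + 1 + t : ℕ) : ℝ) (s + 1) := by
    unfold Gw; push_cast
    apply div_nonneg _ (by positivity)
    apply mul_nonneg (by positivity); linarith
  have hc1 : (D1 : ℝ) ≤ B1 := by exact_mod_cast c1
  have hc0 : (D0 : ℝ) ≤ B0 := by exact_mod_cast c0
  have j1 := i1.trans (mul_le_mul_of_nonneg_left
    (div_le_div_of_nonneg_right hc1 hN1'.le) (Real.sqrt_nonneg _))
  have j0 := i0.trans (mul_le_mul_of_nonneg_left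
    (div_le_div_of_nonneg_right hc0 hN0'.le) (Real.sqrt_nonneg _))
  rw [Nat.cast_add s 1, Nat.cast_one] at j0
  have key := two_point (A1 / N1) (A0 / N0) (N1 / (N1 + N0)) (N0 / (N1 + N0)) _ _ (B1 / N1) (B0 / N0)
    (by positivity) (div_le_one_of_le₀ (by exact_mod_cast a1) hN1'.le)
    (by positivity) (div_le_one_of_le₀ (by exact_mod_cast a0) hN0'.le)
    (by positivity) (by positivity) (by field_simp) hG1 hG0 (by positivity) (by positivity) j1 j0
    (by linarith) (by linarith)
  have e1 : (N1 : ℝ) / (N1 + N0) * (A1 / N1) + N0 / (N1 + N0) * (A0 / N0)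
      = ((A1 + A0 : ℕ) : ℝ) / ((N1 + N0 : ℕ) : ℝ) := by
    push_cast; field_simp
  rw [e1] at key
  have hNN : (0 : ℝ) < ((N1 + N0 : ℕ) : ℝ) := by push_cast; positivity
  have key2 := mul_le_mul_of_nonneg_left key hNN.le
  refine key2.trans (le_of_eq ?_)
  generalize Real.sqrt _ = X
  generalize Real.sqrt _ = Y
  push_cast
  field_simp

lemma avg_weight (m s : ℝ) (hs : 0 ≤ s) (hsm : s + 1 ≤ m) :
    (s + 1) * Real.sqrt (Gw m s + (m - s) / (m + 1)) +
      (m - s) * Real.sqrt (Gw m (s + 1) + (s + 1) / (m + 1)) ≤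
      (m + 1) * Real.sqrt (Gw (m + 1) (s + 1)) := by
  have hm : 0 < m := by linarith
  have h1 : 0 ≤ Gw m s + (m - s) / (m + 1) := by
    unfold Gw
    have : 0 ≤ m - s := by linarith
    positivity
  have h0 : 0 ≤ Gw m (s + 1) + (s + 1) / (m + 1) := by
    unfold Gw
    have : 0 ≤ m - (s + 1) := by linarith
    positivity
  have hW : (s + 1) * (Gw m s + (m - s) / (m + 1)) + (m - s) * (Gw m (s + 1) + (s + 1) / (m + 1))
      ≤ (m + 1) * Gw (m + 1) (s + 1) := by
    have : (m + 1) * Gw (m + 1) (s + 1) - ((s + 1) * (Gw m s + (m - s) / (m + 1)) +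
      (m - s) * (Gw m (s + 1) + (s + 1) / (m + 1))) = 2 * (s + 1) * (m - s) / (m * (m + 1)) := by
      unfold Gw
      field_simp
      ring
    have h2 : 0 ≤ 2 * (s + 1) * (m - s) / (m * (m + 1)) := by
      have : 0 ≤ m - s := by linarith
      positivity
    linarith
  have hR : (m + 1) * Real.sqrt (Gw (m + 1) (s + 1)) =
      Real.sqrt ((m + 1) * ((m + 1) * Gw (m + 1) (s + 1))) := by
    rw [← mul_assoc, ← sq, Real.sqrt_mul (by positivity), Real.sqrt_sq (by linarith)]
  rw [hR]
  apply Real.le_sqrt_of_sq_le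
  refine le_trans ?_ (mul_le_mul_of_nonneg_left hW (by linarith))
  have q1 := Real.sq_sqrt h1
  have q0 := Real.sq_sqrt h0
  generalize Real.sqrt (Gw m s + (m - s) / (m + 1)) = X at *
  generalize Real.sqrt (Gw m (s + 1) + (s + 1) / (m + 1)) = Y at *
  rw [← q1, ← q0]
  have : 0 ≤ (s + 1) * (m - s) * (X - Y) ^ 2 :=
    mul_nonneg (mul_nonneg (by linarith) (by linarith)) (sq_nonneg _)
  nlinarith

lemma main_ineq (n : ℕ) : ∀ (r : ℕ) (S : Finset ℕ) (A : Finset (Finset ℕ)), r ≤ n → S.card = n →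
      A ⊆ S.powersetCard r →
      (A.card / (n.choose r : ℝ)) * (1 - A.card / (n.choose r : ℝ)) ≤
        Real.sqrt (Gw n r) * ((bdry S r A).card / (n.choose r : ℝ)) := by
  induction n with
  | zero =>
    intro r S A hr hS hA
    have hc := Finset.card_le_card hA
    rw [Finset.card_powersetCard, hS] at hc
    obtain rfl : r = 0 := by omega
    refine le_trans (le_of_eq ?_) (by positivity : (0 : ℝ) ≤ _)
    simp only [Nat.choose_self] at hc ⊢
    interval_cases A.card <;> simp
  | succ m IH =>
    intro r S A hr hS hA
    by_cases hext : r = 0 ∨ r = m + 1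
    · have hc := Finset.card_le_card hA
      rw [Finset.card_powersetCard, hS] at hc
      have h1 : (m + 1).choose r = 1 := by rcases hext with rfl | rfl <;> simp
      refine le_trans (le_of_eq ?_) (by positivity : (0 : ℝ) ≤ _)
      rw [h1] at hc ⊢
      interval_cases A.card <;> simp
    · obtain ⟨s, rfl⟩ : ∃ s, r = s + 1 := ⟨r - 1, by omega⟩
      have hs : s + 1 ≤ m := by omega
      have hsum := Finset.sum_le_sum (fun e he => step m s hs IH S hS A hA e he)
      rw [Finset.sum_const, hS, Finset.sum_add_distrib, ← Finset.mul_sum, ← Finset.mul_sum] at hsum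
      have f1 : ∑ e ∈ S, (((bdry S (s + 1) A).filter (fun x => e ∈ x)).card : ℝ) =
          (bdry S (s + 1) A).card * (s + 1) := by
        have : ∑ e ∈ S, ((bdry S (s + 1) A).filter (fun x => e ∈ x)).card =
          (bdry S (s + 1) A).card * (s + 1) := by
          refine (Finset.sum_card_bipartiteAbove_eq_sum_card_bipartiteBelow (fun e x => e ∈ x)).trans ?_
          rw [Finset.sum_const_nat]
          intro x hx
          have hxS := Finset.mem_powersetCard.mp (Finset.mem_filter.mp hx).1
          rw [← hxS.2]
          congr 1
          ext z
          rw [Finset.mem_bipartiteBelow]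
          exact ⟨fun h => h.2, fun h => ⟨hxS.1 h, h⟩⟩
        exact_mod_cast this
      have f0 : ∑ e ∈ S, (((bdry S (s + 1) A).filter (fun x => e ∉ x)).card : ℝ) =
          (bdry S (s + 1) A).card * (m - s) := by
        have h : ∀ e ∈ S, (((bdry S (s + 1) A).filter (fun x => e ∉ x)).card : ℝ) =
          (bdry S (s + 1) A).card - ((bdry S (s + 1) A).filter (fun x => e ∈ x)).card := by
          intro e _
          rw [eq_sub_iff_add_eq, add_comm]
          exact_mod_cast Finset.card_filter_add_card_filter_not _
        rw [Finset.sum_congr rfl h, Finset.sum_sub_distrib, f1, Finset.sum_const, hS]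
        simp only [nsmul_eq_mul]; push_cast; ring
      rw [f1, f0, nsmul_eq_mul] at hsum
      have hw := avg_weight m s (by positivity) (by exact_mod_cast hs)
      have hw2 := mul_le_mul_of_nonneg_left hw (Nat.cast_nonneg (bdry S (s + 1) A).card)
      have hN : (0 : ℝ) < ((m + 1).choose (s + 1) : ℝ) := by
        exact_mod_cast Nat.choose_pos (by omega)
      rw [← mul_div_assoc, le_div_iff₀ hN]
      push_cast at hsum ⊢
      have hm : (0 : ℝ) < m + 1 := by positivity
      refine le_of_mul_le_mul_left ?_ hm
      linarith

theorem stmt_0 (n r : ℕ) (hn : 2 ≤ n) (hr1 : 1 ≤ r) (hrn : r ≤ n - 1)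
    (A : Finset (Finset ℕ))
    (hA : A ⊆ (Finset.Icc 1 n).powersetCard r)
    (α : ℝ) (hα : (A.card : ℝ) = α * (n.choose r : ℝ)) :
    (((((Finset.Icc 1 n).powersetCard r).filter
        (fun x => x ∉ A ∧ ∃ y ∈ A, (symmDiff x y).card = 2)).card : ℝ))
      ≥ (1/5) * Real.sqrt ((n : ℝ) / ((r : ℝ) * ((n : ℝ) - (r : ℝ))))
          * (α * (1 - α)) * (n.choose r : ℝ) := by
  have h := main_ineq n r (Finset.Icc 1 n) A (by omega) (by simp) hA
  have hN : (0 : ℝ) < (n.choose r : ℝ) := by exact_mod_cast Nat.choose_pos (by omega)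
  have hα' : (A.card : ℝ) / (n.choose r : ℝ) = α := by rw [hα]; field_simp
  rw [hα'] at h
  change ((bdry (Finset.Icc 1 n) r A).card : ℝ) ≥ _
  generalize (bdry (Finset.Icc 1 n) r A).card = B at *
  rw [← mul_div_assoc, le_div_iff₀ hN] at h
  have hr : (0 : ℝ) < r := by exact_mod_cast hr1
  have hnr : (0 : ℝ) < (n : ℝ) - r := by
    have : (r : ℝ) < n := by exact_mod_cast (by omega : r < n)
    linarith
  have hn0 : (0 : ℝ) < n := by linarith
  set T := Real.sqrt ((n : ℝ) / ((r : ℝ) * ((n : ℝ) - (r : ℝ)))) with hT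
  have hTG : T * Real.sqrt (Gw n r) = Real.sqrt 2 := by
    rw [hT, ← Real.sqrt_mul (by positivity)]
    congr 1
    unfold Gw
    field_simp
  have h2 : Real.sqrt 2 ≤ 5 := by
    rw [Real.sqrt_le_left (by norm_num)]; norm_num
  have h3 := mul_le_mul_of_nonneg_left h (Real.sqrt_nonneg _ : 0 ≤ T)
  rw [← mul_assoc T (Real.sqrt (Gw n r)), hTG] at h3
  have h4 : Real.sqrt 2 * (B : ℝ) ≤ 5 * B := mul_le_mul_of_nonneg_right h2 (Nat.cast_nonneg B)
  have h5 : T * (α * (1 - α)) * (n.choose r : ℝ) ≤ 5 * B := by linarith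
  linarith
end

section
/- Let n ≥ 1. If A ⊆ P([n]) with |A| = α·2^n, then the vertex-boundary of A in the hypercube Q_n satisfies |b(A)| ≥ √2·α(1-α)·2^n/√n. -/
open Classical in
/-- Number of sensitive directions in `S` at `x`, counted only when `P x`. -/
noncomputable def hsens (S : Finset ℕ) (P : Finset ℕ → Prop) (x : Finset ℕ) : ℝ :=
  if P x then ((S.filter (fun i => ¬ P (symmDiff x {i}))).card : ℝ) else 0

open Classical in
/-- Indicator. -/
noncomputable def ind (p : Prop) : ℝ := if p then 1 else 0

lemma hsens_nonneg (S : Finset ℕ) (P : Finset ℕ → Prop) (x : Finset ℕ) : 0 ≤ hsens S P x := by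
  unfold hsens; split_ifs <;> positivity

lemma ind_nonneg (p : Prop) : 0 ≤ ind p := by
  unfold ind; split_ifs <;> norm_num

lemma ind_sq (p : Prop) : ind p ^ 2 = ind p := by
  unfold ind; split_ifs <;> norm_num

lemma minkowski {ι : Type*} (s : Finset ι) (u v : ι → ℝ) :
    Real.sqrt ((∑ i ∈ s, u i) ^ 2 + (∑ i ∈ s, v i) ^ 2) ≤
      ∑ i ∈ s, Real.sqrt (u i ^ 2 + v i ^ 2) := by
  have h := norm_sum_le s (fun i => (u i : ℂ) + (v i : ℂ) * Complex.I)
  simp only [Complex.norm_add_mul_I] at h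
  rw [Finset.sum_add_distrib, ← Finset.sum_mul, ← Complex.ofReal_sum, ← Complex.ofReal_sum,
    Complex.norm_add_mul_I] at h
  exact h

lemma scalar (T a b F G D : ℝ) (hT : 0 < T) (hb : 0 ≤ b) (hab : b ≤ a) (haT : a ≤ T)
    (hF : Real.sqrt 2 * (a * (T - a)) / T ≤ F) (hG : Real.sqrt 2 * (b * (T - b)) / T ≤ G)
    (hD : a - b ≤ D) :
    Real.sqrt 2 * ((a + b) * (2 * T - (a + b))) / (2 * T) ≤ Real.sqrt (F ^ 2 + D ^ 2) + G := by
  have h2 : Real.sqrt 2 ^ 2 = 2 := Real.sq_sqrt (by norm_num)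
  set c := Real.sqrt 2 with hc
  have hc0 : 0 ≤ c := Real.sqrt_nonneg _
  have ha : 0 ≤ a := hb.trans hab
  have key : c * (a * (T - a)) / T + c * (a - b) ^ 2 / (2 * T) ≤ Real.sqrt (F ^ 2 + D ^ 2) := by
    apply Real.le_sqrt_of_sq_le
    have hK : 0 ≤ c * (a * (T - a)) / T :=
      div_nonneg (mul_nonneg hc0 (mul_nonneg ha (by linarith))) hT.le
    have h1 : (c * (a * (T - a)) / T) ^ 2 ≤ F ^ 2 := pow_le_pow_left₀ hK hF 2
    have h3 : (a - b) ^ 2 ≤ D ^ 2 := pow_le_pow_left₀ (by linarith) hD 2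
    have h4 : (c * (a * (T - a)) / T + c * (a - b) ^ 2 / (2 * T)) ^ 2
        = (c * (a * (T - a)) / T) ^ 2
          + (a - b) ^ 2 * ((2 * (a * (T - a)) + (a - b) ^ 2 / 2) / T ^ 2) := by
      have : (c * (a * (T - a)) / T + c * (a - b) ^ 2 / (2 * T)) ^ 2
        = (c * (a * (T - a)) / T) ^ 2
          + (a - b) ^ 2 * ((c ^ 2 * (a * (T - a)) + c ^ 2 * (a - b) ^ 2 / 4) / T ^ 2) := by
        field_simp
        ring
      rw [this, h2]; ring
    have h5 : (2 * (a * (T - a)) + (a - b) ^ 2 / 2) / T ^ 2 ≤ 1 := by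
      rw [div_le_one (by positivity)]
      have : (a - b) ^ 2 ≤ a ^ 2 := pow_le_pow_left₀ (by linarith) (by linarith) 2
      nlinarith [sq_nonneg (T - a), sq_nonneg (2 * T - 3 * a)]
    have h6 := mul_le_mul_of_nonneg_left h5 (sq_nonneg (a - b))
    linarith
  have h7 : c * ((a + b) * (2 * T - (a + b))) / (2 * T)
      = c * (a * (T - a)) / T + c * (a - b) ^ 2 / (2 * T) + c * (b * (T - b)) / T := by
    field_simp
    ring
  linarith

lemma hsens_insert0 (S : Finset ℕ) (a : ℕ) (ha : a ∉ S) (P : Finset ℕ → Prop) (x : Finset ℕ)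
    (hx : x ⊆ S) :
    hsens (insert a S) P x = hsens S P x + ind (P x ∧ ¬ P (insert a x)) := by
  classical
  have hax : a ∉ x := fun h => ha (hx h)
  have e : symmDiff x {a} = insert a x := by
    ext i; simp only [Finset.mem_symmDiff, Finset.mem_singleton, Finset.mem_insert]; grind
  unfold hsens ind
  by_cases h : P x
  · rw [if_pos h, if_pos h, Finset.filter_insert, e]
    by_cases h' : P (insert a x)
    · simp [h']
    · simp [h', h, ha]
  · simp [h]

lemma hsens_insert1 (S : Finset ℕ) (a : ℕ) (ha : a ∉ S) (P : Finset ℕ → Prop) (x : Finset ℕ)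
    (hx : x ⊆ S) :
    hsens (insert a S) P (insert a x) =
      hsens S (fun y => P (insert a y)) x + ind (P (insert a x) ∧ ¬ P x) := by
  classical
  have hax : a ∉ x := fun h => ha (hx h)
  have e : symmDiff (insert a x) {a} = x := by
    ext i; simp only [Finset.mem_symmDiff, Finset.mem_singleton, Finset.mem_insert]; grind
  have e2 : ∀ i ∈ S, symmDiff (insert a x) {i} = insert a (symmDiff x {i}) := by
    intro i hi
    ext j; simp only [Finset.mem_symmDiff, Finset.mem_singleton, Finset.mem_insert]; grind
  have e3 : S.filter (fun i => ¬ P (symmDiff (insert a x) {i}))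
      = S.filter (fun i => ¬ P (insert a (symmDiff x {i}))) :=
    Finset.filter_congr (fun i hi => by rw [e2 i hi])
  unfold hsens ind
  by_cases h : P (insert a x)
  · simp only [if_pos h, Finset.filter_insert, e, e3]
    by_cases h' : P x
    · simp [h']
    · simp [h', h, ha]
  · simp [h]

lemma sum_step (S : Finset (Finset ℕ)) (f : Finset ℕ → ℝ) (hf : ∀ x, 0 ≤ f x)
    (P Q : Finset ℕ → Prop) :
    Real.sqrt ((∑ x ∈ S, Real.sqrt (f x)) ^ 2 + (∑ x ∈ S, ind (P x ∧ ¬ Q x)) ^ 2)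
      ≤ ∑ x ∈ S, Real.sqrt (f x + ind (P x ∧ ¬ Q x)) := by
  refine (minkowski _ _ _).trans (le_of_eq ?_)
  refine Finset.sum_congr rfl (fun x _ => ?_)
  rw [Real.sq_sqrt (hf x), ind_sq]

lemma sum_ind_sub (S : Finset (Finset ℕ)) (P Q : Finset ℕ → Prop) :
    ∑ x ∈ S, ind (P x) - ∑ x ∈ S, ind (Q x) ≤ ∑ x ∈ S, ind (P x ∧ ¬ Q x) := by
  rw [← Finset.sum_sub_distrib]
  refine Finset.sum_le_sum (fun x _ => ?_)
  unfold ind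
  by_cases h : P x <;> by_cases h' : Q x <;> simp [h, h']

lemma sum_ind_le (S : Finset ℕ) (P : Finset ℕ → Prop) :
    ∑ x ∈ S.powerset, ind (P x) ≤ 2 ^ S.card := by
  calc ∑ x ∈ S.powerset, ind (P x) ≤ ∑ x ∈ S.powerset, (1 : ℝ) :=
        Finset.sum_le_sum (fun x _ => by unfold ind; split_ifs <;> norm_num)
    _ = 2 ^ S.card := by simp

lemma talagrand (S : Finset ℕ) : ∀ P : Finset ℕ → Prop,
    Real.sqrt 2 * ((∑ x ∈ S.powerset, ind (P x)) *
      (2 ^ S.card - ∑ x ∈ S.powerset, ind (P x))) / 2 ^ S.card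
      ≤ ∑ x ∈ S.powerset, Real.sqrt (hsens S P x) := by
  induction S using Finset.induction_on with
  | empty =>
    intro P
    rw [Finset.powerset_empty, Finset.sum_singleton, Finset.sum_singleton]
    by_cases h : P ∅ <;> simp [ind, hsens, h]
  | insert a S ha ih =>
    intro P
    have ihP := ih P
    have ihQ := ih (fun y => P (insert a y))
    rw [Finset.sum_powerset_insert ha, Finset.sum_powerset_insert ha, Finset.card_insert_of_notMem ha]
    have r0 : ∑ x ∈ S.powerset, Real.sqrt (hsens (insert a S) P x)
        = ∑ x ∈ S.powerset, Real.sqrt (hsens S P x + ind (P x ∧ ¬ P (insert a x))) :=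
      Finset.sum_congr rfl (fun x hx => by
        rw [hsens_insert0 S a ha P x (Finset.mem_powerset.1 hx)])
    have r1 : ∑ x ∈ S.powerset, Real.sqrt (hsens (insert a S) P (insert a x))
        = ∑ x ∈ S.powerset, Real.sqrt (hsens S (fun y => P (insert a y)) x
            + ind (P (insert a x) ∧ ¬ P x)) :=
      Finset.sum_congr rfl (fun x hx => by
        rw [hsens_insert1 S a ha P x (Finset.mem_powerset.1 hx)])
    rw [r0, r1]
    have s0 := sum_step S.powerset (hsens S P) (hsens_nonneg S P) P (fun y => P (insert a y))
    have s1 := sum_step S.powerset (hsens S (fun y => P (insert a y))) (hsens_nonneg S _)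
      (fun y => P (insert a y)) P
    have t0 : ∑ x ∈ S.powerset, Real.sqrt (hsens S P x) ≤
        ∑ x ∈ S.powerset, Real.sqrt (hsens S P x + ind (P x ∧ ¬ P (insert a x))) :=
      Finset.sum_le_sum (fun x _ => Real.sqrt_le_sqrt (by linarith [ind_nonneg (P x ∧ ¬ P (insert a x))]))
    have t1 : ∑ x ∈ S.powerset, Real.sqrt (hsens S (fun y => P (insert a y)) x) ≤
        ∑ x ∈ S.powerset, Real.sqrt (hsens S (fun y => P (insert a y)) x
            + ind (P (insert a x) ∧ ¬ P x)) :=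
      Finset.sum_le_sum (fun x _ => Real.sqrt_le_sqrt (by linarith [ind_nonneg (P (insert a x) ∧ ¬ P x)]))
    have d0 := sum_ind_sub S.powerset P (fun y => P (insert a y))
    have d1 := sum_ind_sub S.powerset (fun y => P (insert a y)) P
    have l0 := sum_ind_le S P
    have l1 := sum_ind_le S (fun y => P (insert a y))
    have n0 : 0 ≤ ∑ x ∈ S.powerset, ind (P x) := Finset.sum_nonneg (fun x _ => ind_nonneg _)
    have n1 : 0 ≤ ∑ x ∈ S.powerset, ind (P (insert a x)) :=
      Finset.sum_nonneg (fun x _ => ind_nonneg _)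
    have hT : (0 : ℝ) < 2 ^ S.card := by positivity
    rw [pow_succ, mul_comm _ (2 : ℝ)]
    rcases le_total (∑ x ∈ S.powerset, ind (P (insert a x))) (∑ x ∈ S.powerset, ind (P x)) with h | h
    · have := scalar _ _ _ _ _ _ hT n1 h l0 ihP ihQ d0
      linarith
    · have := scalar _ _ _ _ _ _ hT n0 h l1 ihQ ihP d1
      rw [add_comm (∑ x ∈ S.powerset, ind (P x))]
      linarith

lemma hsens_le (S : Finset ℕ) (P : Finset ℕ → Prop) (x : Finset ℕ) : hsens S P x ≤ S.card := by
  classical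
  unfold hsens
  split_ifs
  · exact_mod_cast Finset.card_filter_le _ _
  · positivity

lemma hsens_eq_zero (S : Finset ℕ) (P : Finset ℕ → Prop) (x : Finset ℕ)
    (h : P x → ∀ i ∈ S, P (symmDiff x {i})) : hsens S P x = 0 := by
  classical
  unfold hsens
  split_ifs with h'
  · rw [Nat.cast_eq_zero, Finset.card_eq_zero, Finset.filter_eq_empty_iff]
    intro i hi hn
    exact hn (h h' i hi)
  · rfl

/-- **An approximate vertex-isoperimetric inequality for the hypercube `Q_n`.**
If `A ⊆ P([n])` with `|A| = α·2^n`, then the vertex-boundary of `A` in `Q_n`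
(where `x ~ y` iff `|x Δ y| = 1`) satisfies `|b(A)| ≥ √2·α(1-α)·2^n/√n`. -/
theorem stmt_1 (n : ℕ) (hn : 1 ≤ n)
    (A : Finset (Finset ℕ))
    (hA : A ⊆ (Finset.Icc 1 n).powerset)
    (α : ℝ) (hα : (A.card : ℝ) = α * 2 ^ n) :
    ((((Finset.Icc 1 n).powerset).filter
        (fun x => x ∉ A ∧ ∃ y ∈ A, (symmDiff x y).card = 1)).card : ℝ)
      ≥ Real.sqrt 2 * (α * (1 - α)) * 2 ^ n / Real.sqrt (n : ℝ) := by
  classical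
  have key := talagrand (Finset.Icc 1 n) (fun x => x ∉ A)
  have hcard : (Finset.Icc 1 n).card = n := by simp
  have hsum : ∑ x ∈ (Finset.Icc 1 n).powerset, ind (x ∉ A) = 2 ^ n - α * 2 ^ n := by
    have h1 : ∀ x, ind (x ∉ A) = 1 - (if x ∈ A then (1 : ℝ) else 0) := by
      intro x; unfold ind; by_cases h : x ∈ A <;> simp [h]
    simp only [h1]
    rw [Finset.sum_sub_distrib, Finset.sum_ite_mem, Finset.inter_eq_right.2 hA, ← hα]
    simp
  rw [hsum, hcard] at key
  set B := ((Finset.Icc 1 n).powerset).filter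
        (fun x => x ∉ A ∧ ∃ y ∈ A, (symmDiff x y).card = 1) with hB
  have hup : ∑ x ∈ (Finset.Icc 1 n).powerset, Real.sqrt (hsens (Finset.Icc 1 n) (fun x => x ∉ A) x)
      ≤ B.card * Real.sqrt n := by
    have h2 : ∀ x ∈ (Finset.Icc 1 n).powerset,
        Real.sqrt (hsens (Finset.Icc 1 n) (fun x => x ∉ A) x) ≤
          if x ∉ A ∧ ∃ y ∈ A, (symmDiff x y).card = 1 then Real.sqrt n else 0 := by
      intro x hx
      split_ifs with h
      · apply Real.sqrt_le_sqrt
        have := hsens_le (Finset.Icc 1 n) (fun x => x ∉ A) x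
        rwa [hcard] at this
      · have : hsens (Finset.Icc 1 n) (fun x => x ∉ A) x = 0 := by
          apply hsens_eq_zero
          intro h' i _ hi
          exact h ⟨h', _, hi, by simp⟩
        rw [this, Real.sqrt_zero]
    refine (Finset.sum_le_sum h2).trans (le_of_eq ?_)
    rw [← Finset.sum_filter, Finset.sum_const, nsmul_eq_mul]
  have hn' : 0 < Real.sqrt (n : ℝ) := Real.sqrt_pos.2 (by exact_mod_cast hn)
  rw [ge_iff_le, div_le_iff₀ hn']
  refine le_trans (le_of_eq ?_) (key.trans hup)
  field_simp
  ring
end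

section
/- Let n be a positive integer, let α ∈ (0,1), and let f(x) = √2·x(1-x). If 0 ≤ δ ≤ f(α)/√n and α+δ ≤ 1 and α-δ ≥ 0, then (f(α+δ) + f(α-δ))/(2f(α)) ≥ √(1 - 1/n). -/
/-- Claim 2.2 of the paper: with `f(x) = √2·x(1-x)`, if `0 ≤ δ ≤ f(α)/√n`
(and `α ± δ` stay in `[0,1]`), then `(f(α+δ)+f(α-δ))/(2f(α)) ≥ √(1-1/n)`. -/
theorem stmt_2 (n : ℕ) (hn : 0 < n) (α δ : ℝ)
    (hα : α ∈ Set.Ioo (0 : ℝ) 1)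
    (f : ℝ → ℝ) (hf : ∀ x, f x = Real.sqrt 2 * (x * (1 - x)))
    (hδ0 : 0 ≤ δ) (hδ : δ ≤ f α / Real.sqrt (n : ℝ))
    (h1 : α + δ ≤ 1) (h2 : 0 ≤ α - δ) :
    (f (α + δ) + f (α - δ)) / (2 * f α) ≥ Real.sqrt (1 - 1 / (n : ℝ)) := by
  obtain ⟨ha0, ha1⟩ := hα
  have hn1 : (1 : ℝ) ≤ n := by exact_mod_cast hn
  have hnpos : (0 : ℝ) < n := by linarith
  have hp : 0 < α * (1 - α) := mul_pos ha0 (by linarith)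
  have hp4 : α * (1 - α) ≤ 1 / 4 := by nlinarith [sq_nonneg (α - 1 / 2)]
  have hs : 0 < Real.sqrt 2 := Real.sqrt_pos.mpr (by norm_num)
  have hsq : δ ^ 2 ≤ 2 * (α * (1 - α)) ^ 2 / n := by
    have h := pow_le_pow_left₀ hδ0 hδ 2
    rw [hf, div_pow, mul_pow, Real.sq_sqrt (by norm_num), Real.sq_sqrt hnpos.le] at h
    exact h
  have hratio : (f (α + δ) + f (α - δ)) / (2 * f α) = 1 - δ ^ 2 / (α * (1 - α)) := by
    rw [hf, hf, hf]
    have h1a : (1 - α) ≠ 0 := by linarith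
    have := ha0.ne'
    have := hs.ne'
    field_simp
    ring
  have hb : δ ^ 2 / (α * (1 - α)) ≤ 1 / (2 * n) := by
    rw [div_le_iff₀ hp]
    refine hsq.trans ?_
    rw [div_mul_eq_mul_div, div_le_div_iff₀ hnpos (by linarith)]
    have : 0 ≤ α * (1 - α) * n * (1 - 4 * (α * (1 - α))) :=
      mul_nonneg (mul_nonneg hp.le hnpos.le) (by linarith)
    nlinarith
  have hx : 1 / (2 * (n : ℝ)) = (1 / n) / 2 := by
    field_simp
  have hle : 1 / (n : ℝ) ≤ 1 := by
    rw [div_le_one hnpos]; exact hn1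
  rw [hratio]
  have hfin : Real.sqrt (1 - 1 / (n : ℝ)) ≤ 1 - (1 / n) / 2 := by
    apply Real.sqrt_le_iff.mpr
    constructor
    · linarith
    · nlinarith [sq_nonneg (1 / (n : ℝ))]
  linarith
end

section
/- Let n ≥ 4, let 2 ≤ r ≤ n/2, let 0 ≤ c ≤ 1/5, and let α, α₀, α₁ ∈ [0,1] satisfy α = (1 - r/n)·α₀ + (r/n)·α₁. Then the maximum of the three quantities (i) c·√((n-1)/(r(n-1-r)))·(1 - r/n)·α₀(1-α₀) + (r/n)(α₀ - α₁), (ii) c·√((n-1)/((r-1)(n-r)))·(r/n)·α₁(1-α₁) + ((n-r)/n)(α₁ - α₀), (iii) c·√((n-1)/(r(n-1-r)))·(1 - r/n)·α₀(1-α₀) + c·√((n-1)/((r-1)(n-r)))·(r/n)·α₁(1-α₁), is at least c·√(n/(r(n-r)))·α(1-α). -/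
/-- Large deviation case. -/
lemma aux_big (p q c D A x y : ℝ) (hp : 0 < p) (hq : 0 < q) (hpq : p + q = 1)
    (hc0 : 0 ≤ c) (hc : c ≤ 1 / 5) (hD : 0 < D) (hD1 : D ≤ 1) (hA : D ≤ A)
    (hx0 : 0 ≤ x) (hx1 : x ≤ 1) (hy0 : 0 ≤ y) (hy1 : y ≤ 1)
    (hd : D * (x * (1 - x)) / 4 ≤ x - y) :
    c * D * ((q * x + p * y) * (1 - (q * x + p * y))) ≤
      c * A * q * (x * (1 - x)) + p * (x - y) := by
  have hf : 0 ≤ x * (1 - x) := mul_nonneg hx0 (by linarith)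
  have hd0 : 0 ≤ x - y := le_trans (by positivity) hd
  have hcD0 : 0 ≤ c * D := by positivity
  have hcD : c * D ≤ 1 / 5 := by nlinarith
  have hcD' : c * D ≤ D / 5 := by nlinarith
  have h1 : c * D * q * (x * (1 - x)) ≤ c * A * q * (x * (1 - x)) := by gcongr
  have hbr : q * (x - y) + (x + y - 1) ≤ 1 := by nlinarith
  have h2 : c * D * (q * (x - y) + (x + y - 1)) ≤ 1 / 5 := by nlinarith
  have h3 : c * D * (x * (1 - x)) ≤ D / 5 * (x * (1 - x)) := by gcongr
  have h4 : (x - y) * (c * D * (q * (x - y) + (x + y - 1))) ≤ (x - y) * (1 / 5) := by gcongr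
  have h5 : p * (c * D * (x * (1 - x)) + (x - y) * (c * D * (q * (x - y) + (x + y - 1))))
      ≤ p * (x - y) := by
    apply mul_le_mul_of_nonneg_left _ hp.le
    linarith
  have hid : c * D * ((q * x + p * y) * (1 - (q * x + p * y))) =
      c * D * q * (x * (1 - x)) +
      p * (c * D * (x * (1 - x)) + (x - y) * (c * D * (q * (x - y) + (x + y - 1)))) := by
    have : q = 1 - p := by linarith
    subst this; ring
  linarith

/-- Small deviation case. -/
lemma aux_small (p q c D A B N x y M : ℝ) (hp : 0 < p) (hq : 0 < q) (hpq : p + q = 1)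
    (hc0 : 0 ≤ c) (hD : 0 < D) (hN : 0 < N) (hDN : D ^ 2 * (p * q) = 1 / N)
    (hA : D * p / (3 * N) ≤ q * (A - D)) (hB : D * q / (3 * N) ≤ p * (B - D))
    (hM0 : 0 ≤ M) (hM1 : M ≤ 1) (hx : 3 / 4 * M ≤ x * (1 - x)) (hy : 3 / 4 * M ≤ y * (1 - y))
    (hd : (x - y) ^ 2 ≤ (D * M / 4) ^ 2) :
    c * D * ((q * x + p * y) * (1 - (q * x + p * y))) ≤
      c * A * q * (x * (1 - x)) + c * B * p * (y * (1 - y)) := by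
  have hid : c * D * ((q * x + p * y) * (1 - (q * x + p * y))) =
      c * (D * q * (x * (1 - x)) + D * p * (y * (1 - y)) + D * ((p * q) * (x - y) ^ 2)) := by
    have : q = 1 - p := by linarith
    subst this; ring
  have h1 : D * p / (3 * N) * (3 / 4 * M) ≤ q * (A - D) * (x * (1 - x)) :=
    mul_le_mul hA hx (by positivity) (le_trans (by positivity) hA)
  have h2 : D * q / (3 * N) * (3 / 4 * M) ≤ p * (B - D) * (y * (1 - y)) :=
    mul_le_mul hB hy (by positivity) (le_trans (by positivity) hB)
  have h3 : D * ((p * q) * (x - y) ^ 2) ≤ D * ((p * q) * (D * M / 4) ^ 2) := by gcongr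
  have h4 : D * ((p * q) * (D * M / 4) ^ 2) = D * M * (1 / N) * M / 16 := by
    rw [← hDN]; ring
  have h5 : D * p / (3 * N) * (3 / 4 * M) + D * q / (3 * N) * (3 / 4 * M)
      = D * M * (1 / N) / 4 := by
    have : q = 1 - p := by linarith
    subst this; field_simp; ring
  have h6 : 0 ≤ D * M * (1 / N) := by positivity
  have h7 : D * M * (1 / N) * M ≤ D * M * (1 / N) := by nlinarith
  rw [hid]
  have : D * q * (x * (1 - x)) + D * p * (y * (1 - y)) + D * ((p * q) * (x - y) ^ 2)
     ≤ A * q * (x * (1 - x)) + B * p * (y * (1 - y)) := by linarith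
  calc _ ≤ c * (A * q * (x * (1 - x)) + B * p * (y * (1 - y))) :=
        mul_le_mul_of_nonneg_left this hc0
    _ = _ := by ring

lemma aux_sqrt (X Y u : ℝ) (hX : 0 ≤ X) (hu : 0 ≤ u) (hu1 : u ≤ 1) (h : X * (1 + u) ≤ Y) :
    Real.sqrt X * (1 + u / 3) ≤ Real.sqrt Y := by
  apply Real.le_sqrt_of_sq_le
  rw [mul_pow, Real.sq_sqrt hX]
  refine le_trans (mul_le_mul_of_nonneg_left ?_ hX) h
  nlinarith

/-- Proposition 3.1 of the paper (the technical inequality behind the induction).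
With `α = (1 - r/n)·α₀ + (r/n)·α₁`, the maximum of the three displayed quantities is at
least `c·√(n/(r(n-r)))·α(1-α)`. -/
theorem stmt_3 (n r : ℕ) (hn : 4 ≤ n) (hr2 : 2 ≤ r) (hrn : 2 * r ≤ n)
    (c α α₀ α₁ : ℝ) (hc0 : 0 ≤ c) (hc : c ≤ 1 / 5)
    (hα : α ∈ Set.Icc (0 : ℝ) 1) (hα0 : α₀ ∈ Set.Icc (0 : ℝ) 1)
    (hα1 : α₁ ∈ Set.Icc (0 : ℝ) 1)
    (heq : α = (1 - (r : ℝ) / n) * α₀ + ((r : ℝ) / n) * α₁) :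
    max (max
      (c * Real.sqrt (((n : ℝ) - 1) / ((r : ℝ) * ((n : ℝ) - 1 - r))) * (1 - (r : ℝ) / n)
          * (α₀ * (1 - α₀)) + ((r : ℝ) / n) * (α₀ - α₁))
      (c * Real.sqrt (((n : ℝ) - 1) / (((r : ℝ) - 1) * ((n : ℝ) - r))) * ((r : ℝ) / n)
          * (α₁ * (1 - α₁)) + (((n : ℝ) - r) / n) * (α₁ - α₀)))
      (c * Real.sqrt (((n : ℝ) - 1) / ((r : ℝ) * ((n : ℝ) - 1 - r))) * (1 - (r : ℝ) / n)
          * (α₀ * (1 - α₀))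
        + c * Real.sqrt (((n : ℝ) - 1) / (((r : ℝ) - 1) * ((n : ℝ) - r))) * ((r : ℝ) / n)
          * (α₁ * (1 - α₁)))
      ≥ c * Real.sqrt ((n : ℝ) / ((r : ℝ) * ((n : ℝ) - r))) * (α * (1 - α)) := by
  have hn' : (4 : ℝ) ≤ n := by exact_mod_cast hn
  have hr' : (2 : ℝ) ≤ r := by exact_mod_cast hr2
  have hrn' : 2 * (r : ℝ) ≤ n := by exact_mod_cast hrn
  clear hn hr2 hrn
  generalize (n : ℝ) = n at *
  generalize (r : ℝ) = r at *
  have hn0 : 0 < n := by linarith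
  have hr0 : 0 < r := by linarith
  have hnr : 0 < n - r := by linarith
  have hnr1 : 0 < n - 1 - r := by linarith
  have hr1 : 0 < r - 1 := by linarith
  have hX : 0 < n / (r * (n - r)) := by positivity
  have hA1 : Real.sqrt (n / (r * (n - r))) * (1 + r / (n * (n - r)) / 3) ≤
      Real.sqrt ((n - 1) / (r * (n - 1 - r))) := by
    apply aux_sqrt _ _ _ hX.le (by positivity)
    · rw [div_le_one (by positivity)]; nlinarith
    · have e1 : n / (r * (n - r)) * (1 + r / (n * (n - r))) = 1 / r + (1 / (n - r) + 1 / (n - r) ^ 2) := by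
        field_simp; ring
      have e2 : (n - 1) / (r * (n - 1 - r)) = 1 / r + 1 / (n - 1 - r) := by
        field_simp; ring
      rw [e1, e2]
      gcongr
      rw [div_add_div _ _ (by positivity) (by positivity), div_le_div_iff₀ (by positivity) hnr1]
      nlinarith
  have hB1 : Real.sqrt (n / (r * (n - r))) * (1 + (n - r) / (n * r) / 3) ≤
      Real.sqrt ((n - 1) / ((r - 1) * (n - r))) := by
    apply aux_sqrt _ _ _ hX.le (by positivity)
    · rw [div_le_one (by positivity)]; nlinarith
    · have e1 : n / (r * (n - r)) * (1 + (n - r) / (n * r)) = (1 / r + 1 / r ^ 2) + 1 / (n - r) := by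
        field_simp; ring
      have e2 : (n - 1) / ((r - 1) * (n - r)) = 1 / (r - 1) + 1 / (n - r) := by
        field_simp; ring
      rw [e1, e2]
      gcongr
      rw [div_add_div _ _ (by positivity) (by positivity), div_le_div_iff₀ (by positivity) hr1]
      nlinarith
  have hD1 : Real.sqrt (n / (r * (n - r))) ≤ 1 := by
    rw [Real.sqrt_le_left (by norm_num), one_pow, div_le_one (by positivity)]
    nlinarith
  have hD0 : 0 < Real.sqrt (n / (r * (n - r))) := Real.sqrt_pos.mpr hX
  have hD2 := Real.sq_sqrt hX.le
  generalize Real.sqrt (n / (r * (n - r))) = D at *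
  generalize Real.sqrt ((n - 1) / (r * (n - 1 - r))) = A at *
  generalize Real.sqrt ((n - 1) / ((r - 1) * (n - r))) = B at *
  obtain ⟨hx0, hx1⟩ := hα0
  obtain ⟨hy0, hy1⟩ := hα1
  have hqe : (n - r) / n = 1 - r / n := by field_simp
  have hp : 0 < r / n := by positivity
  have hq : 0 < 1 - r / n := by rw [← hqe]; positivity
  have hDN : D ^ 2 * (r / n * (1 - r / n)) = 1 / n := by
    rw [hD2, ← hqe]; field_simp
  have hA2 : D * (r / n) / (3 * n) ≤ (1 - r / n) * (A - D) := by
    have : D * (r / n) / (3 * n) = (1 - r / n) * (D * (1 + r / (n * (n - r)) / 3) - D) := by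
      rw [← hqe]; field_simp; ring
    rw [this]; gcongr
  have hB2 : D * (1 - r / n) / (3 * n) ≤ r / n * (B - D) := by
    have : D * (1 - r / n) / (3 * n) = r / n * (D * (1 + (n - r) / (n * r) / 3) - D) := by
      rw [← hqe]; field_simp; ring
    rw [this]; gcongr
  have hAD : D ≤ A := le_trans (le_mul_of_one_le_right hD0.le
    (le_add_of_nonneg_right (by positivity))) hA1
  have hBD : D ≤ B := le_trans (le_mul_of_one_le_right hD0.le
    (le_add_of_nonneg_right (by positivity))) hB1
  rw [hqe]
  clear hA1 hB1 hD2 hqe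
  generalize hpe : r / n = p at *
  generalize hqe : 1 - p = q at *
  have hpq : p + q = 1 := by linarith
  subst heq
  have hf0 : 0 ≤ α₀ * (1 - α₀) := mul_nonneg hx0 (by linarith)
  have hf1 : 0 ≤ α₁ * (1 - α₁) := mul_nonneg hy0 (by linarith)
  rw [ge_iff_le, le_max_iff, le_max_iff]
  by_cases h1 : D * (α₀ * (1 - α₀)) / 4 ≤ α₀ - α₁
  · exact Or.inl (Or.inl (aux_big p q c D A α₀ α₁ hp hq hpq hc0 hc hD0 hD1 hAD hx0 hx1 hy0 hy1 h1))
  by_cases h2 : D * (α₁ * (1 - α₁)) / 4 ≤ α₁ - α₀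
  · left; right
    have := aux_big q p c D B α₁ α₀ hq hp (by linarith) hc0 hc hD0 hD1 hBD hy0 hy1 hx0 hx1 h2
    rwa [add_comm (p * α₁)] at this
  right
  push Not at h1 h2
  have k0 : D * (α₀ * (1 - α₀)) ≤ α₀ * (1 - α₀) := mul_le_of_le_one_left hf0 hD1
  have k1 : D * (α₁ * (1 - α₁)) ≤ α₁ * (1 - α₁) := mul_le_of_le_one_left hf1 hD1
  rcases le_total α₁ α₀ with h | h
  · refine aux_small p q c D A B n α₀ α₁ (α₀ * (1 - α₀)) hp hq hpq hc0 hD0 hn0 hDN hA2 hB2 hf0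
      (by nlinarith) (by linarith) ?_ ?_
    · nlinarith
    · exact pow_le_pow_left₀ (by linarith) h1.le 2
  · refine aux_small p q c D A B n α₀ α₁ (α₁ * (1 - α₁)) hp hq hpq hc0 hD0 hn0 hDN hA2 hB2 hf1
      (by nlinarith) ?_ (by linarith) ?_
    · nlinarith
    · rw [← neg_sub, neg_sq]
      exact pow_le_pow_left₀ (by linarith) h2.le 2
end

section
/- Let n ≥ 4, let 2 ≤ r ≤ n/2, let 0 ≤ c ≤ 1/5, let α ∈ [0,1] and let δ be a real number with α + δ ∈ [0,1]. If δ ≥ 2c·(r/n)·α(1-α)·θ_n^(r), then c·(1 - r/n)·(α+δ)(1-α-δ)·θ_{n-1}^(r) + δ ≥ c·α(1-α)·θ_n^(r). -/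
/-- Claim 3.2 of the paper: if `δ ≥ 2c·(r/n)·α(1-α)·θ_n^(r)`, then
`c·(1-r/n)·(α+δ)(1-α-δ)·θ_{n-1}^(r) + δ ≥ c·α(1-α)·θ_n^(r)`,
where `θ_m^(k) = √(m/(k(m-k)))`. -/
theorem stmt_4 (n r : ℕ) (hn : 4 ≤ n) (hr2 : 2 ≤ r) (hrn : 2 * r ≤ n)
    (c α δ : ℝ) (hc0 : 0 ≤ c) (hc : c ≤ 1 / 5)
    (hα : α ∈ Set.Icc (0 : ℝ) 1) (hαδ : α + δ ∈ Set.Icc (0 : ℝ) 1)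
    (hδ : δ ≥ 2 * c * ((r : ℝ) / n) * (α * (1 - α))
        * Real.sqrt ((n : ℝ) / ((r : ℝ) * ((n : ℝ) - r)))) :
    c * (1 - (r : ℝ) / n) * ((α + δ) * (1 - α - δ))
        * Real.sqrt (((n : ℝ) - 1) / ((r : ℝ) * ((n : ℝ) - 1 - r))) + δ
      ≥ c * (α * (1 - α)) * Real.sqrt ((n : ℝ) / ((r : ℝ) * ((n : ℝ) - r))) := by
  obtain ⟨ha0, ha1⟩ := hα
  obtain ⟨hd0, hd1⟩ := hαδ
  have hr : (2 : ℝ) ≤ r := by exact_mod_cast hr2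
  have hn' : (2 : ℝ) * r ≤ n := by exact_mod_cast hrn
  have hnpos : (0 : ℝ) < n := by linarith
  have hTT : Real.sqrt ((n : ℝ) / ((r : ℝ) * ((n : ℝ) - r)))
      ≤ Real.sqrt (((n : ℝ) - 1) / ((r : ℝ) * ((n : ℝ) - 1 - r))) := by
    apply Real.sqrt_le_sqrt
    rw [div_le_div_iff₀ (mul_pos (by linarith) (by linarith)) (mul_pos (by linarith) (by linarith))]
    nlinarith
  have hT1 : Real.sqrt ((n : ℝ) / ((r : ℝ) * ((n : ℝ) - r))) ≤ 1 := by
    rw [Real.sqrt_le_one, div_le_one (mul_pos (by linarith) (by linarith))]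
    nlinarith
  have hT0 := Real.sqrt_nonneg ((n : ℝ) / ((r : ℝ) * ((n : ℝ) - r)))
  have hp0 : 0 ≤ (r : ℝ) / n := by positivity
  have hp1 : (r : ℝ) / n ≤ 1 := by rw [div_le_one hnpos]; linarith
  generalize Real.sqrt ((n : ℝ) / ((r : ℝ) * ((n : ℝ) - r))) = T at *
  generalize Real.sqrt (((n : ℝ) - 1) / ((r : ℝ) * ((n : ℝ) - 1 - r))) = T' at *
  generalize (r : ℝ) / n = p at *
  have hA : 0 ≤ α * (1 - α) := mul_nonneg ha0 (by linarith)
  have hq : 0 ≤ 1 - p := by linarith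
  have hB : 0 ≤ (α + δ) * (1 - α - δ) := mul_nonneg hd0 (by linarith)
  have h1 : c * (1 - p) * ((α + δ) * (1 - α - δ)) * T
      ≤ c * (1 - p) * ((α + δ) * (1 - α - δ)) * T' :=
    mul_le_mul_of_nonneg_left hTT (by positivity)
  have hδ0 : 0 ≤ δ := le_trans (by positivity) hδ
  have hk0 : 0 ≤ c * (1 - p) * T := by positivity
  have hk1 : c * (1 - p) * T ≤ 1 / 5 := by
    have e1 : c * (1 - p) ≤ c := mul_le_of_le_one_right hc0 (by linarith)
    have e2 : c * (1 - p) * T ≤ c * (1 - p) := mul_le_of_le_one_right (by positivity) hT1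
    linarith
  have h2 : 1 / 2 ≤ 1 + c * (1 - p) * T * (1 - 2 * α - δ) := by
    have := mul_le_mul_of_nonneg_left (show (-1 : ℝ) ≤ 1 - 2 * α - δ by linarith) hk0
    linarith
  have h3 := mul_le_mul_of_nonneg_left h2 hδ0
  have h4 : c * (1 - p) * ((α + δ) * (1 - α - δ)) * T + δ - c * (α * (1 - α)) * T
      = δ * (1 + c * (1 - p) * T * (1 - 2 * α - δ)) - c * p * (α * (1 - α)) * T := by ring
  linarith
end

section
/- Let n ≥ 4, let 2 ≤ r ≤ n/2, let 0 ≤ c ≤ 1/5, let α ∈ [0,1] and let δ be a real number with α - ((n-r)/r)·δ ∈ [0,1]. If δ ≤ -2c·(r/n)·α(1-α)·θ_n^(r), then c·(r/n)·(α - ((n-r)/r)δ)·(1 - α + ((n-r)/r)δ)·θ_{n-1}^(r-1) - ((n-r)/r)·δ ≥ c·α(1-α)·θ_n^(r). -/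
/-- Claim 3.3 of the paper: if `δ ≤ -2c·(r/n)·α(1-α)·θ_n^(r)`, then
`c·(r/n)·(α-((n-r)/r)δ)(1-α+((n-r)/r)δ)·θ_{n-1}^(r-1) - ((n-r)/r)·δ ≥ c·α(1-α)·θ_n^(r)`,
where `θ_m^(k) = √(m/(k(m-k)))`. -/
theorem stmt_5 (n r : ℕ) (hn : 4 ≤ n) (hr2 : 2 ≤ r) (hrn : 2 * r ≤ n)
    (c α δ : ℝ) (hc0 : 0 ≤ c) (hc : c ≤ 1 / 5)
    (hα : α ∈ Set.Icc (0 : ℝ) 1)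
    (hαδ : α - (((n : ℝ) - r) / r) * δ ∈ Set.Icc (0 : ℝ) 1)
    (hδ : δ ≤ -(2 * c * ((r : ℝ) / n) * (α * (1 - α))
        * Real.sqrt ((n : ℝ) / ((r : ℝ) * ((n : ℝ) - r))))) :
    c * ((r : ℝ) / n) * ((α - (((n : ℝ) - r) / r) * δ) * (1 - α + (((n : ℝ) - r) / r) * δ))
        * Real.sqrt (((n : ℝ) - 1) / (((r : ℝ) - 1) * ((n : ℝ) - r)))
      - (((n : ℝ) - r) / r) * δ
      ≥ c * (α * (1 - α)) * Real.sqrt ((n : ℝ) / ((r : ℝ) * ((n : ℝ) - r))) := by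
  have hr : (2:ℝ) ≤ r := by exact_mod_cast hr2
  have hnr : 2 * (r:ℝ) ≤ n := by exact_mod_cast hrn
  obtain ⟨ha0, ha1⟩ := hα
  obtain ⟨hb0, hb1⟩ := hαδ
  set θ := Real.sqrt ((n : ℝ) / ((r : ℝ) * ((n : ℝ) - r))) with hθ
  have hθ0 : 0 ≤ θ := Real.sqrt_nonneg _
  have hr0 : (0:ℝ) < r := by linarith
  have hn0 : (0:ℝ) < n := by linarith
  have hk : 0 ≤ ((n : ℝ) - r) / r := div_nonneg (by linarith) hr0.le
  have h1 : 0 ≤ c * ((r : ℝ) / n) * ((α - (((n : ℝ) - r) / r) * δ)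
      * (1 - α + (((n : ℝ) - r) / r) * δ))
      * Real.sqrt (((n : ℝ) - 1) / (((r : ℝ) - 1) * ((n : ℝ) - r))) := by
    have h : 0 ≤ 1 - α + (((n : ℝ) - r) / r) * δ := by linarith
    exact mul_nonneg (mul_nonneg (by positivity) (mul_nonneg hb0 h)) (Real.sqrt_nonneg _)
  have hX : 0 ≤ c * (α * (1 - α)) * θ :=
    mul_nonneg (mul_nonneg hc0 (mul_nonneg ha0 (by linarith))) hθ0
  have h2 := mul_le_mul_of_nonneg_left hδ hk
  have h3 : ((n : ℝ) - r) / r * -(2 * c * ((r : ℝ) / n) * (α * (1 - α)) * θ)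
      = -((2 * ((n - r) / n)) * (c * (α * (1 - α)) * θ)) := by
    field_simp
  have h4 : (1:ℝ) ≤ 2 * ((n - r) / n) := by
    rw [← mul_div_assoc, le_div_iff₀ hn0]; linarith
  have h5 := mul_le_mul_of_nonneg_right h4 hX
  rw [h3] at h2
  linarith
end

section
/- Let n ≥ 4, let 2 ≤ r ≤ n/2, let 0 ≤ c ≤ 1/5, let α ∈ [0,1] and let δ be a real number with α + δ ∈ [0,1] and α - ((n-r)/r)·δ ∈ [0,1]. If |δ| ≤ 2c·(r/n)·α(1-α)·θ_n^(r), then c·(1 - r/n)·(α+δ)(1-α-δ)·θ_{n-1}^(r) + c·(r/n)·(α - ((n-r)/r)δ)·(1 - α + ((n-r)/r)δ)·θ_{n-1}^(r-1) ≥ c·α(1-α)·θ_n^(r). -/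
set_option maxHeartbeats 2000000 in
/-- Claim 3.4 of the paper: if `|δ| ≤ 2c·(r/n)·α(1-α)·θ_n^(r)`, then
`c·(1-r/n)·(α+δ)(1-α-δ)·θ_{n-1}^(r) + c·(r/n)·(α-((n-r)/r)δ)(1-α+((n-r)/r)δ)·θ_{n-1}^(r-1)
  ≥ c·α(1-α)·θ_n^(r)`, where `θ_m^(k) = √(m/(k(m-k)))`. -/
theorem stmt_6 (n r : ℕ) (hn : 4 ≤ n) (hr2 : 2 ≤ r) (hrn : 2 * r ≤ n)
    (c α δ : ℝ) (hc0 : 0 ≤ c) (hc : c ≤ 1 / 5)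
    (hα : α ∈ Set.Icc (0 : ℝ) 1) (hαδ : α + δ ∈ Set.Icc (0 : ℝ) 1)
    (hαδ' : α - (((n : ℝ) - r) / r) * δ ∈ Set.Icc (0 : ℝ) 1)
    (hδ : |δ| ≤ 2 * c * ((r : ℝ) / n) * (α * (1 - α))
        * Real.sqrt ((n : ℝ) / ((r : ℝ) * ((n : ℝ) - r)))) :
    c * (1 - (r : ℝ) / n) * ((α + δ) * (1 - α - δ))
        * Real.sqrt (((n : ℝ) - 1) / ((r : ℝ) * ((n : ℝ) - 1 - r)))
      + c * ((r : ℝ) / n) * ((α - (((n : ℝ) - r) / r) * δ) * (1 - α + (((n : ℝ) - r) / r) * δ))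
        * Real.sqrt (((n : ℝ) - 1) / (((r : ℝ) - 1) * ((n : ℝ) - r)))
      ≥ c * (α * (1 - α)) * Real.sqrt ((n : ℝ) / ((r : ℝ) * ((n : ℝ) - r))) := by
  have hN : (4 : ℝ) ≤ n := by exact_mod_cast hn
  have hR : (2 : ℝ) ≤ r := by exact_mod_cast hr2
  have hRN : 2 * (r : ℝ) ≤ n := by exact_mod_cast hrn
  obtain ⟨ha0, ha1⟩ := hα
  clear hαδ hαδ' hn hr2 hrn
  generalize (n : ℝ) = N at *
  generalize (r : ℝ) = R at *
  have hNR : 0 < N - R := by linarith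
  have hR0 : 0 < R := by linarith
  have hN0 : 0 < N := by linarith
  have hR1 : 0 < R - 1 := by linarith
  have hN1 : 0 < N - 1 - R := by linarith
  have hTsq := Real.sq_sqrt (show 0 ≤ N / (R * (N - R)) by positivity)
  have hTpos : 0 < √(N / (R * (N - R))) := Real.sqrt_pos.mpr (by positivity)
  have hTA : √(N / (R * (N - R))) ≤ √((N - 1) / (R * (N - 1 - R))) := by
    apply Real.sqrt_le_sqrt
    rw [div_le_div_iff₀ (by positivity) (by positivity)]
    nlinarith [mul_pos hR0 hR0]
  have hAB : √((N - 1) / (R * (N - 1 - R))) ≤ √((N - 1) / ((R - 1) * (N - R))) := by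
    apply Real.sqrt_le_sqrt
    apply div_le_div_of_nonneg_left (by linarith) (by positivity)
    nlinarith
  have hBT : √((N - 1) / ((R - 1) * (N - R))) ≤ 3 / 2 * √(N / (R * (N - R))) := by
    apply Real.sqrt_le_iff.mpr
    refine ⟨by positivity, ?_⟩
    rw [mul_pow, hTsq, mul_div_assoc', div_le_div_iff₀ (by positivity) (by positivity)]
    have : (N - 1) * R ≤ (3 / 2) ^ 2 * N * (R - 1) := by nlinarith
    nlinarith
  have hBT2 : √(N / (R * (N - R))) * (1 + 1 / (5 * R)) ≤ √((N - 1) / ((R - 1) * (N - R))) := by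
    apply Real.le_sqrt_of_sq_le
    rw [mul_pow, hTsq]
    have h1 : (1 + 1 / (5 * R)) ^ 2 ≤ 1 + 1 / (2 * R) := by
      have : 1 + 1 / (2 * R) - (1 + 1 / (5 * R)) ^ 2 = (5 * R - 2) / (50 * R ^ 2) := by
        field_simp
        ring
      have h2 : 0 ≤ (5 * R - 2) / (50 * R ^ 2) := div_nonneg (by linarith) (by positivity)
      linarith
    calc _ ≤ N / (R * (N - R)) * (1 + 1 / (2 * R)) := by gcongr
      _ = (N * (2 * R + 1)) / (2 * R * R * (N - R)) := by field_simp
      _ ≤ _ := by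
        rw [div_le_div_iff₀ (by positivity) (by positivity)]
        have : N * (2 * R + 1) * (R - 1) ≤ (N - 1) * (2 * R * R) := by nlinarith
        nlinarith
  generalize √((N - 1) / (R * (N - 1 - R))) = A at *
  generalize √((N - 1) / ((R - 1) * (N - R))) = B at *
  generalize √(N / (R * (N - R))) = T at *
  set s := α * (1 - α) with hs
  have hs0 : 0 ≤ s := mul_nonneg ha0 (by linarith)
  have hs4 : s ≤ 1 / 4 := by nlinarith [sq_nonneg (1 - 2 * α)]
  set p := R / N with hp
  have hp0 : 0 < p := by positivity
  have hp2 : p ≤ 1 / 2 := by rw [hp, div_le_iff₀ hN0]; linarith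
  have hk : (N - R) / R = (1 - p) / p := by rw [hp]; field_simp
  have hT2 : T ^ 2 * (p * (1 - p)) = 1 / N := by rw [hTsq, hp]; field_simp
  have hpR : p * (1 / (5 * R)) = 1 / N / 5 := by rw [hp]; field_simp
  have hpN : 2 * (1 / N) ≤ p := by
    rw [hp, mul_one_div]; gcongr
  rw [hk]
  generalize 1 / N = w at *
  have hqT : (1 - p) * T ≤ 3 / 4 := by
    have h1 : ((1 - p) * T) ^ 2 ≤ 1 / 2 := by
      have h2 : ((1 - p) * T) ^ 2 * p = (1 - p) * w := by rw [← hT2]; ring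
      have hw : 0 ≤ w := by
        rw [← hT2]; exact mul_nonneg (by positivity) (mul_nonneg hp0.le (by linarith))
      have h3 : ((1 - p) * T) ^ 2 * p ≤ 1 / 2 * p := by nlinarith
      exact le_of_mul_le_mul_right h3 hp0
    nlinarith
  have hd : |δ| ≤ 2 / 5 * p * s * T := by
    refine hδ.trans ?_
    have : 0 ≤ p * s * T := by positivity
    nlinarith
  have hlin : |δ * (1 - 2 * α) * ((1 - p) * (B - A))| ≤ 3 / 10 * p * s * (B - T) := by
    have hv : |1 - 2 * α| ≤ 1 := abs_le.mpr ⟨by linarith, by linarith⟩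
    have hBA : 0 ≤ (1 - p) * (B - A) := mul_nonneg (by linarith) (by linarith)
    rw [abs_mul, abs_mul, abs_of_nonneg hBA]
    calc |δ| * |1 - 2 * α| * ((1 - p) * (B - A))
        ≤ (2 / 5 * p * s * T) * 1 * ((1 - p) * (B - T)) := by
          gcongr
          linarith
      _ = 2 / 5 * p * s * (B - T) * ((1 - p) * T) := by ring
      _ ≤ 2 / 5 * p * s * (B - T) * (3 / 4) := by
          have : 0 ≤ B - T := by linarith
          gcongr
      _ = _ := by ring
  have hquad : δ ^ 2 * ((1 - p) / p) * (p * A + (1 - p) * B) ≤ 3 / 50 * s * T * w := by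
    have h1 : δ ^ 2 ≤ (2 / 5 * p * s * T) ^ 2 := by
      rw [← sq_abs]; gcongr
    have h2 : p * A + (1 - p) * B ≤ 3 / 2 * T := by nlinarith
    have h3 : 0 ≤ p * A + (1 - p) * B := by
      have : 0 ≤ 1 - p := by linarith
      have : 0 ≤ A := by linarith
      have : 0 ≤ B := by linarith
      positivity
    have hq : 0 ≤ (1 - p) / p := div_nonneg (by linarith) hp0.le
    have hw : 0 ≤ w := by
      rw [← hT2]; exact mul_nonneg (by positivity) (mul_nonneg hp0.le (by linarith))
    calc _ ≤ (2 / 5 * p * s * T) ^ 2 * ((1 - p) / p) * (3 / 2 * T) := by gcongr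
      _ = 6 / 25 * s * s * T * (T ^ 2 * (p * (1 - p))) := by field_simp; ring
      _ = 6 / 25 * s * s * T * w := by rw [hT2]
      _ ≤ 6 / 25 * s * (1 / 4) * T * w := by gcongr
      _ = _ := by ring
  have hmain : 7 / 10 * p * s * (B - T) ≥ 7 / 50 * s * T * w := by
    have h1 : T * (1 / (5 * R)) ≤ B - T := by linarith
    calc 7 / 10 * p * s * (B - T) ≥ 7 / 10 * p * s * (T * (1 / (5 * R))) := by gcongr
      _ = 7 / 10 * s * T * (p * (1 / (5 * R))) := by ring
      _ = _ := by rw [hpR]; ring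
  have hw : 0 ≤ s * T * w := by
    rw [← hT2]
    exact mul_nonneg (by positivity) (mul_nonneg (by positivity) (mul_nonneg hp0.le (by linarith)))
  have hA : 0 ≤ s * ((1 - p) * (A - T)) :=
    mul_nonneg hs0 (mul_nonneg (by linarith) (by linarith))
  have key : 0 ≤ s * ((1 - p) * (A - T)) + p * s * (B - T)
      - δ * (1 - 2 * α) * ((1 - p) * (B - A))
      - δ ^ 2 * ((1 - p) / p) * (p * A + (1 - p) * B) := by
    have := (abs_le.mp hlin).2
    linarith
  have := mul_nonneg hc0 key
  have e : c * (1 - p) * ((α + δ) * (1 - α - δ)) * A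
      + c * p * ((α - (1 - p) / p * δ) * (1 - α + (1 - p) / p * δ)) * B - c * s * T
      = c * (s * ((1 - p) * (A - T)) + p * s * (B - T)
      - δ * (1 - 2 * α) * ((1 - p) * (B - A))
      - δ ^ 2 * ((1 - p) / p) * (p * A + (1 - p) * B)) := by
    rw [hs]
    clear_value p
    field_simp
    ring
  linarith
end

section
/- Let n ≥ 2 and 1 ≤ r ≤ n-1, and let A ⊆ [n]^(r). Then the lower n-section of N(A) equals N(A₀) ∪ ∂⁺(A₁) and the upper n-section of N(A) equals N(A₁) ∪ ∂⁻(A₀), where on the right-hand sides N, ∂⁻, ∂⁺ are taken with respect to the ground set [n-1]. Consequently |N(A)| = |N(A₀) ∪ ∂⁺(A₁)| + |N(A₁) ∪ ∂⁻(A₀)|. -/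
/-- `[m]^(k)`: the `k`-element subsets of `{1,…,m}`. -/
def rSets (m k : ℕ) : Finset (Finset ℕ) := (Finset.Icc 1 m).powersetCard k

/-- The neighbourhood `N(A) = A ∪ b(A)` of `A ⊆ [m]^(k)` in the graph `Γ_m^(k)`
where `x ~ y` iff `|x Δ y| = 2`. -/
def nbhd (m k : ℕ) (A : Finset (Finset ℕ)) : Finset (Finset ℕ) :=
  A ∪ (rSets m k).filter (fun x => x ∉ A ∧ ∃ y ∈ A, (symmDiff x y).card = 2)

/-- The lower `n`-section `B₀ = {x ∈ B : n ∉ x}` of a family `B`. -/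
def lowerSection (n : ℕ) (B : Finset (Finset ℕ)) : Finset (Finset ℕ) :=
  B.filter (fun x => n ∉ x)

/-- The upper `n`-section `B₁ = {x ∈ [n-1]^(r-1) : x ∪ {n} ∈ B}` of a family
`B ⊆ [n]^(r)`. -/
def upperSection (n r : ℕ) (B : Finset (Finset ℕ)) : Finset (Finset ℕ) :=
  (rSets (n - 1) (r - 1)).filter (fun x => insert n x ∈ B)

/-- The lower shadow `∂⁻B = {x ∈ [m]^(k-1) : x ⊂ y for some y ∈ B}` of `B ⊆ [m]^(k)`. -/
def lowerShadow (m k : ℕ) (B : Finset (Finset ℕ)) : Finset (Finset ℕ) :=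
  (rSets m (k - 1)).filter (fun x => ∃ y ∈ B, x ⊂ y)

/-- The upper shadow `∂⁺B = {x ∈ [m]^(k+1) : y ⊂ x for some y ∈ B}` of `B ⊆ [m]^(k)`. -/
def upperShadow (m k : ℕ) (B : Finset (Finset ℕ)) : Finset (Finset ℕ) :=
  (rSets m (k + 1)).filter (fun x => ∃ y ∈ B, y ⊂ x)

theorem aux_mem_rSets {m k : ℕ} {x : Finset ℕ} :
    x ∈ rSets m k ↔ (∀ a ∈ x, 1 ≤ a ∧ a ≤ m) ∧ x.card = k := by
  simp [rSets, Finset.mem_powersetCard, Finset.subset_iff]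

theorem aux_lower {n r : ℕ} (hn : 2 ≤ n) {x : Finset ℕ} :
    x ∈ rSets (n - 1) r ↔ x ∈ rSets n r ∧ n ∉ x := by
  simp only [aux_mem_rSets]
  constructor
  · rintro ⟨h, hc⟩
    refine ⟨⟨fun a ha => ?_, hc⟩, fun hx => ?_⟩
    · have := h a ha
      omega
    · have := h n hx
      omega
  · rintro ⟨⟨h, hc⟩, hx⟩
    refine ⟨fun a ha => ?_, hc⟩
    have := h a ha
    have : a ≠ n := fun e => hx (e ▸ ha)
    omega

theorem aux_insert {n r : ℕ} (hn : 2 ≤ n) (hr : 1 ≤ r) {x : Finset ℕ}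
    (hx : x ∈ rSets (n - 1) (r - 1)) : insert n x ∈ rSets n r := by
  obtain ⟨h1, h2⟩ := (aux_lower hn).1 hx
  rw [aux_mem_rSets] at h1 ⊢
  rw [Finset.card_insert_of_notMem h2]
  refine ⟨fun a ha => ?_, by omega⟩
  rcases Finset.mem_insert.1 ha with rfl | ha
  · omega
  · exact h1.1 a ha

theorem aux_erase {n r : ℕ} (hn : 2 ≤ n) {y : Finset ℕ}
    (hy : y ∈ rSets n r) (h : n ∈ y) : y.erase n ∈ rSets (n - 1) (r - 1) := by
  rw [aux_lower hn]
  refine ⟨?_, Finset.notMem_erase n y⟩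
  rw [aux_mem_rSets] at hy ⊢
  refine ⟨fun a ha => hy.1 a (Finset.mem_of_mem_erase ha), ?_⟩
  rw [Finset.card_erase_of_mem h, hy.2]

theorem aux_symm_insert {n : ℕ} {x y : Finset ℕ} (hx : n ∉ x) (hy : n ∉ y) :
    symmDiff (insert n x) (insert n y) = symmDiff x y := by
  ext a
  simp only [Finset.mem_symmDiff, Finset.mem_insert]
  by_cases h : a = n
  · subst h; simp [hx, hy]
  · simp [h]

theorem aux_symm_card {n : ℕ} {x y : Finset ℕ} (hx : n ∉ x) (hy : n ∉ y)
    (hc : x.card = y.card + 1) :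
    (symmDiff x (insert n y)).card = 2 ↔ y ⊂ x := by
  have e : symmDiff x (insert n y) = insert n (symmDiff x y) := by
    ext a
    simp only [Finset.mem_symmDiff, Finset.mem_insert]
    by_cases h : a = n
    · subst h; simp [hx]
    · simp [h]
  have hns : n ∉ symmDiff x y := by simp [Finset.mem_symmDiff, hx, hy]
  have hs : (symmDiff x y).card = (x \ y).card + (y \ x).card := by
    rw [symmDiff_def, Finset.sup_eq_union, Finset.card_union_of_disjoint disjoint_sdiff_sdiff]
  have h1 := Finset.card_sdiff_add_card x y
  have h2 := Finset.card_sdiff_add_card y x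
  rw [Finset.union_comm] at h2
  rw [e, Finset.card_insert_of_notMem hns, hs]
  constructor
  · intro h
    have h0 : (y \ x).card = 0 := by omega
    rw [Finset.card_eq_zero, Finset.sdiff_eq_empty_iff_subset] at h0
    refine Finset.ssubset_iff_subset_ne.2 ⟨h0, ?_⟩
    rintro rfl
    omega
  · intro h
    have h0 : (y \ x).card = 0 := by
      rw [Finset.card_eq_zero, Finset.sdiff_eq_empty_iff_subset]
      exact h.1
    omega

theorem aux_mem_nbhd {m k : ℕ} {A : Finset (Finset ℕ)} {x : Finset ℕ} :
    x ∈ nbhd m k A ↔ x ∈ A ∨ (x ∈ rSets m k ∧ ∃ y ∈ A, (symmDiff x y).card = 2) := by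
  simp only [nbhd, Finset.mem_union, Finset.mem_filter]
  tauto

theorem aux_card {n r : ℕ} (hn : 2 ≤ n) (hr : 1 ≤ r) {B : Finset (Finset ℕ)}
    (hB : B ⊆ rSets n r) :
    B.card = (lowerSection n B).card + (upperSection n r B).card := by
  have h := Finset.card_filter_add_card_filter_not (s := B) (fun x => n ∉ x)
  rw [← h, lowerSection]
  congr 1
  refine Finset.card_bij' (fun y _ => y.erase n) (fun x _ => insert n x) ?_ ?_ ?_ ?_
  · intro y hy
    simp only [Finset.mem_filter, not_not] at hy
    simp only [upperSection, Finset.mem_filter]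
    exact ⟨aux_erase hn (hB hy.1) hy.2, by rw [Finset.insert_erase hy.2]; exact hy.1⟩
  · intro x hx
    simp only [upperSection, Finset.mem_filter] at hx
    simp [hx.2]
  · intro y hy
    simp only [Finset.mem_filter, not_not] at hy
    exact Finset.insert_erase hy.2
  · intro x hx
    simp only [upperSection, Finset.mem_filter] at hx
    exact Finset.erase_insert ((aux_lower hn).1 hx.1).2

/-- The `n`-sections of `N(A)` for `A ⊆ [n]^(r)`:
`(N(A))₀ = N(A₀) ∪ ∂⁺(A₁)` and `(N(A))₁ = N(A₁) ∪ ∂⁻(A₀)`, where on the right-hand sides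
`N`, `∂⁻`, `∂⁺` are taken with respect to the ground set `[n-1]`; consequently
`|N(A)| = |N(A₀) ∪ ∂⁺(A₁)| + |N(A₁) ∪ ∂⁻(A₀)|`. -/
theorem stmt_7 (n r : ℕ) (hn : 2 ≤ n) (hr1 : 1 ≤ r) (hrn : r ≤ n - 1)
    (A : Finset (Finset ℕ)) (hA : A ⊆ rSets n r) :
    lowerSection n (nbhd n r A)
        = nbhd (n - 1) r (lowerSection n A)
            ∪ upperShadow (n - 1) (r - 1) (upperSection n r A)
      ∧ upperSection n r (nbhd n r A)
        = nbhd (n - 1) (r - 1) (upperSection n r A)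
            ∪ lowerShadow (n - 1) r (lowerSection n A)
      ∧ (nbhd n r A).card
        = (nbhd (n - 1) r (lowerSection n A)
            ∪ upperShadow (n - 1) (r - 1) (upperSection n r A)).card
          + (nbhd (n - 1) (r - 1) (upperSection n r A)
            ∪ lowerShadow (n - 1) r (lowerSection n A)).card := by
  have hlow : lowerSection n (nbhd n r A)
        = nbhd (n - 1) r (lowerSection n A)
            ∪ upperShadow (n - 1) (r - 1) (upperSection n r A) := by
    ext x
    simp only [lowerSection, upperShadow, Finset.mem_union, Finset.mem_filter, aux_mem_nbhd,
      Nat.sub_add_cancel hr1]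
    constructor
    · rintro ⟨hx | ⟨hx, y, hy, hc⟩, hnx⟩
      · exact Or.inl (Or.inl ⟨hx, hnx⟩)
      · have hx' := (aux_lower hn).2 ⟨hx, hnx⟩
        by_cases hny : n ∈ y
        · right
          have he := aux_erase hn (hA hy) hny
          refine ⟨hx', y.erase n, ?_, ?_⟩
          · simp only [upperSection, Finset.mem_filter]
            exact ⟨he, by rw [Finset.insert_erase hny]; exact hy⟩
          · rw [← aux_symm_card hnx (Finset.notMem_erase n y), Finset.insert_erase hny]
            · exact hc
            · have h1 := (aux_mem_rSets.1 hx).2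
              have h2 := (aux_mem_rSets.1 he).2
              omega
        · exact Or.inl (Or.inr ⟨hx', y, ⟨hy, hny⟩, hc⟩)
    · rintro ((⟨hx, hnx⟩ | ⟨hx, y, ⟨hy, hny⟩, hc⟩) | ⟨hx, y, hy, hs⟩)
      · exact ⟨Or.inl hx, hnx⟩
      · obtain ⟨h1, h2⟩ := (aux_lower hn).1 hx
        exact ⟨Or.inr ⟨h1, y, hy, hc⟩, h2⟩
      · obtain ⟨h1, h2⟩ := (aux_lower hn).1 hx
        simp only [upperSection, Finset.mem_filter] at hy
        refine ⟨Or.inr ⟨h1, insert n y, hy.2, ?_⟩, h2⟩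
        rw [aux_symm_card h2 ((aux_lower hn).1 hy.1).2]
        · exact hs
        · have h3 := (aux_mem_rSets.1 hx).2
          have h4 := (aux_mem_rSets.1 hy.1).2
          omega
  have hup : upperSection n r (nbhd n r A)
        = nbhd (n - 1) (r - 1) (upperSection n r A)
            ∪ lowerShadow (n - 1) r (lowerSection n A) := by
    ext x
    simp only [upperSection, lowerShadow, Finset.mem_union, Finset.mem_filter, aux_mem_nbhd]
    simp only [lowerSection, Finset.mem_filter]
    constructor
    · rintro ⟨hx, hx2 | ⟨hx2, y, hy, hc⟩⟩
      · exact Or.inl (Or.inl ⟨hx, hx2⟩)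
      · have hnx := ((aux_lower hn).1 hx).2
        by_cases hny : n ∈ y
        · left; right
          have he := aux_erase hn (hA hy) hny
          refine ⟨hx, y.erase n, ⟨he, by rw [Finset.insert_erase hny]; exact hy⟩, ?_⟩
          rw [← aux_symm_insert hnx (Finset.notMem_erase n y), Finset.insert_erase hny]
          exact hc
        · right
          refine ⟨hx, y, ⟨hy, hny⟩, ?_⟩
          rw [← aux_symm_card hny hnx, symmDiff_comm]
          · exact hc
          · have h3 := (aux_mem_rSets.1 hx).2
            have h4 := (aux_mem_rSets.1 (hA hy)).2
            omega
    · rintro ((⟨hx, hx2⟩ | ⟨hx, y, ⟨hy, hy2⟩, hc⟩) | ⟨hx, y, ⟨hy, hny⟩, hs⟩)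
      · exact ⟨hx, Or.inl hx2⟩
      · refine ⟨hx, Or.inr ⟨aux_insert hn hr1 hx, insert n y, hy2, ?_⟩⟩
        rw [aux_symm_insert ((aux_lower hn).1 hx).2 ((aux_lower hn).1 hy).2]
        exact hc
      · refine ⟨hx, Or.inr ⟨aux_insert hn hr1 hx, y, hy, ?_⟩⟩
        rw [symmDiff_comm, aux_symm_card hny ((aux_lower hn).1 hx).2]
        · exact hs
        · have h3 := (aux_mem_rSets.1 hx).2
          have h4 := (aux_mem_rSets.1 (hA hy)).2
          omega
  refine ⟨hlow, hup, ?_⟩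
  rw [← hlow, ← hup]
  refine aux_card hn hr1 ?_
  intro x hx
  rcases aux_mem_nbhd.1 hx with h | h
  · exact hA h
  · exact h.1
end

section
/- Let n be even, let r be odd with 1 ≤ r ≤ n-1, and let A = {x ∈ [n]^(r) : |x ∩ {1,…,n/2}| > r/2}. Then the vertex-boundary of A in Γ_n^(r) is b(A) = {x ∈ [n]^(r) : |x ∩ {1,…,n/2}| = (r-1)/2}, and hence |b(A)| = C(n/2, (r-1)/2) · C(n/2, (r+1)/2). -/
theorem bdry_aux (U L : Finset ℕ) (k : ℕ) (hLU : L ⊆ U) (hk : k < L.card) (x : Finset ℕ)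
    (hxU : x ⊆ U) (hx : x.card = 2 * k + 1) :
    (¬ (k < (x ∩ L).card) ∧ ∃ y : Finset ℕ, (y ⊆ U ∧ y.card = 2 * k + 1 ∧ k < (y ∩ L).card) ∧
      (symmDiff x y).card = 2) ↔ (x ∩ L).card = k := by
  constructor
  · rintro ⟨h1, y, ⟨hyU, hyc, hyk⟩, hs⟩
    have e1 : (symmDiff x y).card = (x \ y).card + (y \ x).card := by
      rw [symmDiff_def, Finset.sup_eq_union, Finset.card_union_of_disjoint disjoint_sdiff_sdiff]
    have e2 := Finset.card_sdiff_add_card_inter x y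
    have e3 := Finset.card_sdiff_add_card_inter y x
    rw [Finset.inter_comm y x] at e3
    have e4 : (y ∩ L).card ≤ (x ∩ L).card + (y \ x).card := by
      refine le_trans (Finset.card_le_card ?_) (Finset.card_union_le _ _)
      intro a ha
      simp only [Finset.mem_inter, Finset.mem_union, Finset.mem_sdiff] at *
      tauto
    omega
  · intro h
    refine ⟨by omega, ?_⟩
    have e2 := Finset.card_sdiff_add_card_inter x L
    obtain ⟨a, ha⟩ : (x \ L).Nonempty := Finset.card_pos.mp (by omega)
    have e3 := Finset.card_sdiff_add_card_inter L x
    rw [Finset.inter_comm L x] at e3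
    obtain ⟨b, hb⟩ : (L \ x).Nonempty := Finset.card_pos.mp (by omega)
    rw [Finset.mem_sdiff] at ha hb
    have hab : a ≠ b := fun h => ha.2 (h ▸ hb.1)
    refine ⟨insert b (x.erase a), ⟨?_, ?_, ?_⟩, ?_⟩
    · intro c hc
      rw [Finset.mem_insert, Finset.mem_erase] at hc
      rcases hc with rfl | hc
      · exact hLU hb.1
      · exact hxU hc.2
    · rw [Finset.card_insert_of_notMem (by simp [hb.2]), Finset.card_erase_of_mem ha.1]
      omega
    · have : insert b (x.erase a) ∩ L = insert b (x ∩ L) := by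
        ext c
        simp only [Finset.mem_inter, Finset.mem_insert, Finset.mem_erase]
        grind
      rw [this, Finset.card_insert_of_notMem (by simp [hb.2])]
      omega
    · have : symmDiff x (insert b (x.erase a)) = {a, b} := by
        ext c
        simp only [Finset.mem_symmDiff, Finset.mem_insert, Finset.mem_erase,
          Finset.mem_singleton]
        grind
      rw [this, Finset.card_pair hab]

theorem count_aux (U L : Finset ℕ) (k j : ℕ) (hLU : L ⊆ U) :
    ((U.powersetCard (k + j)).filter (fun x => (x ∩ L).card = k)).card
      = L.card.choose k * (U \ L).card.choose j := by
  rw [← Finset.card_powersetCard, ← Finset.card_powersetCard, ← Finset.card_product]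
  refine Finset.card_nbij' (fun x => (x ∩ L, x \ L)) (fun p => p.1 ∪ p.2) ?_ ?_ ?_ ?_
  · intro x hx
    simp only [Finset.coe_filter, Finset.mem_powersetCard, Set.mem_setOf_eq, Finset.mem_coe,
      Finset.mem_product] at *
    have e2 := Finset.card_sdiff_add_card_inter x L
    exact ⟨⟨Finset.inter_subset_right, hx.2⟩, Finset.sdiff_subset_sdiff hx.1.1 le_rfl, by omega⟩
  · rintro ⟨p, q⟩ hx
    simp only [Finset.coe_filter, Finset.mem_powersetCard, Set.mem_setOf_eq, Finset.mem_coe,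
      Finset.mem_product] at *
    obtain ⟨⟨h1, h2⟩, h3, h4⟩ := hx
    have hd : Disjoint p q := by
      rw [Finset.disjoint_left]
      intro a ha hq
      exact (Finset.mem_sdiff.mp (h3 hq)).2 (h1 ha)
    have : (p ∪ q) ∩ L = p := by
      ext c
      have := @h1 c
      have := @h3 c
      grind
    refine ⟨⟨Finset.union_subset (h1.trans hLU) (h3.trans Finset.sdiff_subset), ?_⟩, ?_⟩
    · rw [Finset.card_union_of_disjoint hd, h2, h4]
    · rw [this, h2]
  · intro x hx
    ext c
    simp only [Finset.mem_union, Finset.mem_inter, Finset.mem_sdiff]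
    tauto
  · rintro ⟨p, q⟩ hx
    simp only [Finset.mem_powersetCard, Finset.mem_coe, Finset.mem_product] at hx
    obtain ⟨⟨h1, h2⟩, h3, h4⟩ := hx
    ext c
    · have := @h1 c
      have := @h3 c
      grind
    · have := @h1 c
      have := @h3 c
      grind

/-- For `n` even and `r` odd, the family `A = {x ∈ [n]^(r) : |x ∩ {1,…,n/2}| > r/2}` has
vertex-boundary (in the graph `Γ_n^(r)`, `x ~ y` iff `|x Δ y| = 2`)
`b(A) = {x ∈ [n]^(r) : |x ∩ {1,…,n/2}| = (r-1)/2}`, and hence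
`|b(A)| = C(n/2,(r-1)/2)·C(n/2,(r+1)/2)`. -/
theorem stmt_10 (n r : ℕ) (hn : Even n) (hr : Odd r) (hr1 : 1 ≤ r) (hrn : r ≤ n - 1)
    (A : Finset (Finset ℕ))
    (hA : A = ((Finset.Icc 1 n).powersetCard r).filter
        (fun x => ((x ∩ Finset.Icc 1 (n / 2)).card : ℝ) > (r : ℝ) / 2)) :
    ((Finset.Icc 1 n).powersetCard r).filter
        (fun x => x ∉ A ∧ ∃ y ∈ A, (symmDiff x y).card = 2)
      = ((Finset.Icc 1 n).powersetCard r).filter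
        (fun x => (x ∩ Finset.Icc 1 (n / 2)).card = (r - 1) / 2)
    ∧ (((Finset.Icc 1 n).powersetCard r).filter
        (fun x => x ∉ A ∧ ∃ y ∈ A, (symmDiff x y).card = 2)).card
      = (n / 2).choose ((r - 1) / 2) * (n / 2).choose ((r + 1) / 2) := by
  obtain ⟨m, rfl⟩ := hn
  obtain ⟨k, rfl⟩ := hr
  have hm : (m + m) / 2 = m := by omega
  have hk1 : (2 * k + 1 - 1) / 2 = k := by omega
  have hk2 : (2 * k + 1 + 1) / 2 = k + 1 := by omega
  rw [hm] at hA ⊢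
  rw [hk1, hk2]
  have hLU : Finset.Icc 1 m ⊆ Finset.Icc 1 (m + m) :=
    Finset.Icc_subset_Icc le_rfl (by omega)
  have hcast : ∀ c : ℕ, ((c : ℝ) > ((2 * k + 1 : ℕ) : ℝ) / 2) ↔ k < c := by
    intro c
    rw [gt_iff_lt, div_lt_iff₀ (by norm_num)]
    have : (c : ℝ) * 2 = ((c * 2 : ℕ) : ℝ) := by push_cast; ring
    rw [this, Nat.cast_lt]
    omega
  have hmem : ∀ y, y ∈ A ↔ (y ⊆ Finset.Icc 1 (m + m) ∧ y.card = 2 * k + 1 ∧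
      k < (y ∩ Finset.Icc 1 m).card) := by
    intro y
    rw [hA, Finset.mem_filter, Finset.mem_powersetCard, hcast, and_assoc]
  have key : ((Finset.Icc 1 (m + m)).powersetCard (2 * k + 1)).filter
        (fun x => x ∉ A ∧ ∃ y ∈ A, (symmDiff x y).card = 2)
      = ((Finset.Icc 1 (m + m)).powersetCard (2 * k + 1)).filter
        (fun x => (x ∩ Finset.Icc 1 m).card = k) := by
    apply Finset.filter_congr
    intro x hx
    rw [Finset.mem_powersetCard] at hx
    rw [← bdry_aux (Finset.Icc 1 (m + m)) (Finset.Icc 1 m) k hLU (by simp; omega) x hx.1 hx.2]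
    simp only [hmem, hx.1, hx.2, true_and]
  refine ⟨key, ?_⟩
  rw [key]
  have := count_aux (Finset.Icc 1 (m + m)) (Finset.Icc 1 m) k (k + 1) hLU
  rw [Finset.card_sdiff_of_subset hLU, Nat.card_Icc, Nat.card_Icc,
    show k + (k + 1) = 2 * k + 1 by ring, show m + m + 1 - 1 - (m + 1 - 1) = m by omega,
    show m + 1 - 1 = m by omega] at this
  exact this
end

section
/- Let n be even and let r be odd with 1 ≤ r ≤ n-1. Then C(n, n/2) · C(n/2, (r-1)/2) · C(n/2, (r+1)/2) = C(n, r) · C(r, (r-1)/2) · C(n-r, (n-r+1)/2). (Both sides count the number of pairs (y,z) with y an (n/2)-subset of [n], z an r-subset of [n], and |y ∩ z| = (r-1)/2.) -/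
/-- For `n` even and `r` odd with `1 ≤ r ≤ n-1`:
`C(n,n/2)·C(n/2,(r-1)/2)·C(n/2,(r+1)/2) = C(n,r)·C(r,(r-1)/2)·C(n-r,(n-r+1)/2)`.
(Both sides count pairs `(y,z)` with `y ∈ [n]^(n/2)`, `z ∈ [n]^(r)`, `|y ∩ z| = (r-1)/2`.) -/
theorem stmt_11 (n r : ℕ) (hn : Even n) (hr : Odd r) (hr1 : 1 ≤ r) (hrn : r ≤ n - 1) :
    n.choose (n / 2) * (n / 2).choose ((r - 1) / 2) * (n / 2).choose ((r + 1) / 2)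
      = n.choose r * r.choose ((r - 1) / 2) * (n - r).choose ((n - r + 1) / 2) := by
  obtain ⟨m, rfl⟩ := hn
  obtain ⟨k, rfl⟩ := hr
  obtain ⟨j, rfl⟩ : ∃ j, m = k + 1 + j := ⟨m - (k + 1), by omega⟩
  have e1 : (k + 1 + j + (k + 1 + j)) / 2 = k + 1 + j := by omega
  have e2 : (2 * k + 1 - 1) / 2 = k := by omega
  have e3 : (2 * k + 1 + 1) / 2 = k + 1 := by omega
  have e4 : k + 1 + j + (k + 1 + j) - (2 * k + 1) = 2 * j + 1 := by omega
  have e5 : (2 * j + 1 + 1) / 2 = j + 1 := by omega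
  rw [e4, e1, e2, e3, e5]
  have key : ∀ a b c : ℕ, c = a + b →
      (c.choose a : ℚ) = (c.factorial : ℚ) / (a.factorial * b.factorial) := by
    rintro a b c rfl
    exact Nat.cast_add_choose ℚ
  have f : ∀ a : ℕ, (a.factorial : ℚ) ≠ 0 := fun a => by
    exact_mod_cast a.factorial_ne_zero
  have h1 := f k
  have h2 := f (k + 1)
  have h3 := f j
  have h4 := f (j + 1)
  have h5 := f (k + 1 + j)
  have h6 := f (2 * k + 1)
  have h7 := f (2 * j + 1)
  apply Nat.cast_injective (R := ℚ)
  push_cast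
  rw [key (k + 1 + j) (k + 1 + j) _ rfl, key k (j + 1) (k + 1 + j) (by omega),
    key (k + 1) j (k + 1 + j) rfl, key (2 * k + 1) (2 * j + 1) _ (by omega),
    key k (k + 1) (2 * k + 1) (by omega), key (j + 1) j (2 * j + 1) (by omega)]
  generalize ((k + 1 + j + (k + 1 + j)).factorial : ℚ) = N
  generalize ((k + 1 + j).factorial : ℚ) = M at *
  generalize ((2 * k + 1).factorial : ℚ) = R at *
  generalize ((2 * j + 1).factorial : ℚ) = S at *
  generalize ((k + 1).factorial : ℚ) = K at *
  generalize ((j + 1).factorial : ℚ) = J at *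
  field_simp
end
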